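/- arXiv:1810.05190 — 3 statements merged into one kernel-verified Lean document; each statement's English description precedes it below -/
import Mathlib

section
/- Let n, q be natural numbers with n ≥ q+1. Then the horizontal player H has a winning strategy for the q-double-response game on S_{∞×n}: she can forever prevent the vertical player V from claiming a set of edges whose dual edges contain a top-bottom crossing dual path. -/
namespace CrossingGames

/-- A vertex of the square integer lattice `ℤ²`. -/
abbrev Vtx : Type := ℤ × ℤ

/-- An edge of the square integer lattice `ℤ²`, encoded as a base vertex together with a
direction: `(v, true)` is the horizontal edge joining `v = (x,y)` to `(x+1,y)`, while
`(v, false)` is the vertical edge joining `v = (x,y)` to `(x,y+1)`. -/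
abbrev Edge : Type := Vtx × Bool

/-- The two endpoints of an edge. -/
def ends (e : Edge) : Vtx × Vtx :=
  (e.1, if e.2 then (e.1.1 + 1, e.1.2) else (e.1.1, e.1.2 + 1))

/-- The edge `e` joins the vertices `u` and `v`. -/
def joins (e : Edge) (u v : Vtx) : Prop :=
  ((ends e).1 = u ∧ (ends e).2 = v) ∨ ((ends e).1 = v ∧ (ends e).2 = u)

/-- The vertex set of the grid `Λ_{m×n}`: all `(x,y) ∈ ℤ²` with `1 ≤ x ≤ m`, `1 ≤ y ≤ n`. -/
def lamVtx (m n : ℕ) : Set Vtx :=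
  {v | 1 ≤ v.1 ∧ v.1 ≤ (m : ℤ) ∧ 1 ≤ v.2 ∧ v.2 ≤ (n : ℤ)}

/-- The edge set of the grid `Λ_{m×n}`: lattice edges with both endpoints in `Λ_{m×n}`. -/
def lamEdges (m n : ℕ) : Set Edge :=
  {e | (ends e).1 ∈ lamVtx m n ∧ (ends e).2 ∈ lamVtx m n}

/-- The edge set of the board `S_{m×n}`: the grid `Λ_{m×n}` with all of its leftmost and
rightmost vertical edges deleted. -/
def sEdges (m n : ℕ) : Set Edge :=
  {e ∈ lamEdges m n | ¬ (e.2 = false ∧ (e.1.1 = 1 ∨ e.1.1 = (m : ℤ)))}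

/-- The list of consecutive pairs of a list. -/
def cp {α : Type*} (l : List α) : List (α × α) := l.zip l.tail

/-- `S` contains all the edges of a left-right crossing path of a board with `m` columns
and `n` rows: a path of edges of `S` joining a vertex `(1,y)` on the left-hand side of the
board to a vertex `(m,y')` on its right-hand side. -/
def HasCrossing (m n : ℕ) (S : Set Edge) : Prop :=
  ∃ l : List Vtx,
    (∃ v, l.head? = some v ∧ v.1 = 1) ∧
    (∃ v, l.getLast? = some v ∧ v.1 = (m : ℤ)) ∧
    (∀ v ∈ l, v ∈ lamVtx m n) ∧
    ∀ p ∈ cp l, ∃ e ∈ S, joins e p.1 p.2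

/-- A dual vertex: `(a,b) : ℤ × ℤ` encodes the dual vertex `(a + 0.5, b + 0.5)` of the
dual lattice `ℤ² + (0.5, 0.5)`. Dual edges are encoded like lattice edges, in these
shifted coordinates. -/
abbrev DVtx : Type := Vtx

/-- The dual edge `e*` of a lattice edge `e`: the unique edge of the dual lattice
crossing `e` (i.e. having the same midpoint). The horizontal edge `(x+0.5, y)` has the
vertical dual edge joining `(x+0.5, y−0.5)` to `(x+0.5, y+0.5)`, and the vertical edge
`(x, y+0.5)` has the horizontal dual edge joining `(x−0.5, y+0.5)` to `(x+0.5, y+0.5)`,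
expressed here in the shifted integer coordinates. -/
def dualEdge (e : Edge) : Edge :=
  if e.2 then ((e.1.1, e.1.2 - 1), false) else ((e.1.1 - 1, e.1.2), true)

/-- `D` (a set of dual edges) contains all the dual edges of a top-bottom crossing dual
path of a board of width `n`: a dual path joining a dual vertex with second coordinate
`n + 0.5` (encoded `n`) to a dual vertex with second coordinate `0.5` (encoded `0`). -/
def HasDualCrossing (n : ℕ) (D : Set Edge) : Prop :=
  ∃ l : List DVtx,
    (∃ v, l.head? = some v ∧ v.2 = (n : ℤ)) ∧
    (∃ v, l.getLast? = some v ∧ v.2 = 0) ∧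
    ∀ p ∈ cp l, ∃ d ∈ D, joins d p.1 p.2

/-- The edge set of the infinite strip `S_{∞×n}`: all lattice edges with both endpoints
having second coordinate in `[1, n]` (the first coordinate is unrestricted). -/
def sInfEdges (n : ℕ) : Set Edge :=
  {e | 1 ≤ (ends e).1.2 ∧ (ends e).1.2 ≤ (n : ℤ) ∧ 1 ≤ (ends e).2.2 ∧ (ends e).2.2 ≤ (n : ℤ)}

/-- A strategy in the `q`-double-response game: given the list of all moves played so far
(oldest first), produce the next move (a finite set of edges to claim). -/
abbrev DStrategy : Type := List (Finset Edge) → Finset Edge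

/-- The union of the moves sitting in positions of the given parity of a history
(`true`: positions 0, 2, 4, …, i.e. the vertical player's moves; `false`: positions
1, 3, 5, …, i.e. the horizontal player's moves). -/
def altUnion : Bool → List (Finset Edge) → Finset Edge
  | _, [] => ∅
  | true, mv :: h => mv ∪ altUnion false h
  | false, _ :: h => altUnion true h

/-- All edges claimed so far in a history. -/
def allClaimed (h : List (Finset Edge)) : Finset Edge := h.foldr (· ∪ ·) ∅

/-- The history of moves (oldest first) after `t` full rounds of the double-response
game, when the vertical player (moving first) uses strategy `σV` and the horizontal
player uses strategy `σH`. -/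
def histD (σV σH : DStrategy) : ℕ → List (Finset Edge)
  | 0 => []
  | t + 1 =>
    let h := histD σV σH t
    h ++ [σV h, σH (h ++ [σV h])]

/-- The vertical player `V` always moves legally in the `q`-double-response game on
`S_{∞×n}`: on each turn he claims some number `r` with `1 ≤ r ≤ q` of as-yet-unclaimed
edges of the board. -/
def VLegal (n q : ℕ) (σV σH : DStrategy) : Prop :=
  ∀ t, (↑(σV (histD σV σH t)) : Set Edge) ⊆ sInfEdges n \ ↑(allClaimed (histD σV σH t)) ∧
    1 ≤ (σV (histD σV σH t)).card ∧ (σV (histD σV σH t)).card ≤ q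

/-- The horizontal player `H` always moves legally in the `q`-double-response game on
`S_{∞×n}`: if `V` has just claimed `r` edges, she answers by claiming `2r`
as-yet-unclaimed edges of the board. -/
def HLegal (n : ℕ) (σV σH : DStrategy) : Prop :=
  ∀ t, (↑(σH (histD σV σH t ++ [σV (histD σV σH t)])) : Set Edge) ⊆
      sInfEdges n \ ↑(allClaimed (histD σV σH t ++ [σV (histD σV σH t)])) ∧
    (σH (histD σV σH t ++ [σV (histD σV σH t)])).card = 2 * (σV (histD σV σH t)).card

/-!
Direct every dual edge to the right or upwards and contract the dual edges claimed by the vertical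
player. The nodes of the resulting digraph carry levels, initially their heights, and the horizontal
player keeps the following true for the unclaimed edges: along an edge the level increases by at
most one, and it never decreases except from level `1` to level `0`; at every node off the two
sides at most two edges leave, at most two enter, and at most one enters from a lower level.

When the vertical player claims `P`, each cluster of `P` is contracted in turn: the one at the
bottom side keeps level `0`, and any other is placed at one of its highest nodes. If the cluster is
spanned by a tree of `r` edges, then claiming `2r` edges of its boundary restores the invariant,
because every tree edge attaching a new node to the cluster disappears from the boundary. Along
edges the levels differ by at most one, so a cluster of fewer than `n` edges at the bottom cannot
reach the top. Hence the two sides are never identified, that is, no dual path crosses.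
-/

section Counting

variable {α : Type*} {S T X : Set α} {k : ℕ} {l : ℕ∞} {p : α}

lemma encard_add_one_le_of_subset_union (hX : X ⊆ S ∪ T) (hpX : p ∉ X) (hp : p ∈ S ∪ T) :
    X.encard + 1 ≤ S.encard + T.encard :=
  calc X.encard + 1 = (insert p X).encard := (Set.encard_insert_of_notMem hpX).symm
    _ ≤ (S ∪ T).encard := Set.encard_le_encard (Set.insert_subset hp hX)
    _ ≤ S.encard + T.encard := Set.encard_union_le S T

lemma encard_add_two_le_of_subset_union (hX : X ⊆ S ∪ T) (hpX : p ∉ X) (hp : p ∈ S ∩ T) :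
    X.encard + 1 + 1 ≤ S.encard + T.encard :=
  calc X.encard + 1 + 1 ≤ (insert p X).encard + (S ∩ T).encard := by
        rw [Set.encard_insert_of_notMem hpX]
        gcongr
        exact Set.one_le_encard_iff_nonempty.2 ⟨p, hp⟩
    _ ≤ (S ∪ T).encard + (S ∩ T).encard := by
        gcongr
        exact Set.insert_subset (Or.inl hp.1) hX
    _ = S.encard + T.encard := Set.encard_union_add_encard_inter S T

lemma encard_pair_le (p q : α) : ({p, q} : Set α).encard ≤ 2 :=
  (Set.encard_insert_le _ _).trans_eq (by rw [Set.encard_singleton, one_add_one_eq_two])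

lemma exists_subset_encard_sdiff_le (hST : S ⊆ T) (hS : S.encard ≤ k) (hT : T.encard ≤ k + l) :
    ∃ B, S ⊆ B ∧ B ⊆ T ∧ B.encard ≤ k ∧ (T \ B).encard ≤ l := by
  rcases le_total T.encard k with hTk | hkT
  · exact ⟨T, hST, subset_rfl, hTk, by simp⟩
  · obtain ⟨B, hSB, hBT, hB⟩ := Set.exists_superset_subset_encard_eq hST hS hkT
    refine ⟨B, hSB, hBT, hB.le, (ENat.add_le_add_iff_right (ENat.natCast_ne_top k)).1 ?_⟩
    calc (T \ B).encard + k = T.encard := by rw [← hB, Set.encard_sdiff_add_encard_of_subset hBT]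
      _ ≤ k + l := hT
      _ = l + k := add_comm _ _

end Counting

section Cut

variable {E N : Type*} {F G : Set E} {src tgt : E → N} {W : Set N} {A : N} {p : E}

/-- The edges of `F` leaving the set of nodes `W`, in the digraph where `e` runs from `src e` to
`tgt e`. The edges entering `W` are `cut F tgt src W`, and the non-loop edges at a node `A` are
the cuts of `{A}`. -/
def cut (F : Set E) (src tgt : E → N) (W : Set N) : Set E :=
  {e ∈ F | src e ∈ W ∧ tgt e ∉ W}

lemma cut_mono (h : G ⊆ F) : cut G src tgt W ⊆ cut F src tgt W :=
  fun _ he => ⟨h he.1, he.2⟩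

lemma cut_sep_mono {q : E → Prop} (h : G ⊆ F) :
    cut {e ∈ G | q e} src tgt W ⊆ cut {e ∈ F | q e} src tgt W :=
  cut_mono fun _ he => ⟨h he.1, he.2⟩

lemma cut_insert_subset : cut G src tgt (insert A W) ⊆ cut G src tgt W ∪ cut G src tgt {A} := by
  rintro e ⟨heG, hsrc | hsrc, htgt⟩
  · exact Or.inr ⟨heG, hsrc, fun h => htgt (Or.inl h)⟩
  · exact Or.inl ⟨heG, hsrc, fun h => htgt (Or.inr h)⟩

/-- The edge `p` joins the node `A` to the set `W`, in either direction. -/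
def Links (src tgt : E → N) (p : E) (A : N) (W : Set N) : Prop :=
  (src p ∈ W ∧ tgt p = A) ∨ (src p = A ∧ tgt p ∈ W)

lemma Links.symm (h : Links src tgt p A W) : Links tgt src p A W :=
  Or.symm (h.imp And.symm And.symm)

lemma Links.notMem_cut_insert (h : Links src tgt p A W) : p ∉ cut G src tgt (insert A W) := by
  rintro ⟨-, -, htgt⟩
  rcases h with ⟨-, h⟩ | ⟨-, h⟩
  exacts [htgt (Or.inl h), htgt (Or.inr h)]

lemma exists_links_of_not_closed (h : ¬ (src p ∈ W ↔ tgt p ∈ W)) :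
    ∃ A ∉ W, Links src tgt p A W := by
  by_cases hsrc : src p ∈ W
  · exact ⟨tgt p, fun htgt => h (iff_of_true hsrc htgt), Or.inl ⟨hsrc, rfl⟩⟩
  · exact ⟨src p, hsrc, Or.inr ⟨rfl, by tauto⟩⟩

end Cut

section Cluster

variable {E N : Type*} {F G P : Set E} {src tgt : E → N} {C : N} {W : Set N} {r : ℕ}

/-- `Cluster P src tgt C W r`: the set of nodes `W` is spanned by a tree of `r` edges of `P`
containing the node `C`, the directions of the edges being ignored. -/
inductive Cluster (P : Set E) (src tgt : E → N) (C : N) : Set N → ℕ → Prop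
  | root : Cluster P src tgt C {C} 0
  | attach {W : Set N} {r : ℕ} {A : N} {p : E} (hW : Cluster P src tgt C W r) (hA : A ∉ W)
      (hp : p ∈ P) (hlink : Links src tgt p A W) : Cluster P src tgt C (insert A W) (r + 1)

namespace Cluster

lemma symm (hW : Cluster P src tgt C W r) : Cluster P tgt src C W r := by
  induction hW with
  | root => exact .root
  | attach _ hA hp hlink ih => exact .attach ih hA hp hlink.symm

lemma root_mem (hW : Cluster P src tgt C W r) : C ∈ W := by
  induction hW with
  | root => exact rfl
  | attach _ _ _ _ ih => exact Or.inr ih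

lemma eq_root_or_exists_endpoint (hW : Cluster P src tgt C W r) {A : N} (hA : A ∈ W) :
    A = C ∨ ∃ p ∈ P, src p = A ∨ tgt p = A := by
  induction hW with
  | root => exact Or.inl hA
  | attach _ _ hp hlink ih =>
    rcases hA with rfl | hA
    · exact Or.inr ⟨_, hp, hlink.symm.imp And.right And.left⟩
    · exact ih hA

/-- The edges of `P` that become loops when `W` is contracted. -/
def internal (P : Set E) (src tgt : E → N) (W : Set N) : Set E :=
  {e ∈ P | src e ∈ W ∧ tgt e ∈ W}

lemma le_encard_internal (hW : Cluster P src tgt C W r) :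
    r ≤ (internal P src tgt W).encard := by
  induction hW with
  | root => simp
  | @attach W r A p _ hA hp hlink ih =>
    have hp_notMem : p ∉ internal P src tgt W := by
      rintro ⟨-, hsrc, htgt⟩
      rcases hlink with ⟨-, rfl⟩ | ⟨rfl, -⟩
      exacts [hA htgt, hA hsrc]
    have hsub : insert p (internal P src tgt W) ⊆
        internal P src tgt (insert A W) := by
      rintro e (rfl | ⟨heP, hsrc, htgt⟩)
      · rcases hlink with ⟨hsrc, htgt⟩ | ⟨hsrc, htgt⟩
        exacts [⟨hp, Or.inr hsrc, Or.inl htgt⟩, ⟨hp, Or.inl hsrc, Or.inr htgt⟩]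
      · exact ⟨heP, Or.inr hsrc, Or.inr htgt⟩
    calc ((r + 1 : ℕ) : ℕ∞) ≤ (internal P src tgt W).encard + 1 := by push_cast; gcongr
      _ = (insert p (internal P src tgt W)).encard :=
          (Set.encard_insert_of_notMem hp_notMem).symm
      _ ≤ (internal P src tgt (insert A W)).encard := Set.encard_le_encard hsub

lemma le_encard (hW : Cluster P src tgt C W r) : r ≤ P.encard :=
  hW.le_encard_internal.trans (Set.encard_le_encard fun _ he => he.1)

variable (src tgt C) in
lemma exists_closed (hP : P.Finite) :
    ∃ W r, Cluster P src tgt C W r ∧ ∀ p ∈ P, src p ∈ W ↔ tgt p ∈ W := by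
  let sizes : Set ℕ := {r | ∃ W, Cluster P src tgt C W r}
  have hbdd : BddAbove sizes := ⟨P.ncard, fun r ⟨_, hW⟩ => by
    exact_mod_cast hP.cast_ncard_eq ▸ hW.le_encard⟩
  obtain ⟨W, hW⟩ : sSup sizes ∈ sizes := Nat.sSup_mem ⟨0, _, .root⟩ hbdd
  refine ⟨W, _, hW, fun p hp => ?_⟩
  by_contra hopen
  obtain ⟨A, hA, hlink⟩ := exists_links_of_not_closed hopen
  have : sSup sizes + 1 ≤ sSup sizes := le_csSup hbdd ⟨_, hW.attach hA hp hlink⟩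
  omega

lemma internal_nonempty (hW : Cluster P src tgt C W r)
    (hclosed : ∀ p ∈ P, src p ∈ W ↔ tgt p ∈ W) (htouch : ∃ p ∈ P, src p = C ∨ tgt p = C) :
    (internal P src tgt W).Nonempty := by
  obtain ⟨p, hp, rfl | rfl⟩ := htouch
  exacts [⟨p, hp, hW.root_mem, (hclosed p hp).1 hW.root_mem⟩,
    ⟨p, hp, (hclosed p hp).2 hW.root_mem, hW.root_mem⟩]

/-- The edge attaching a new node `A` leaves the cut. So attaching `A` adds at most one edge to
the cut even if `A` has two outgoing edges, as long as the attaching edge was counted before. -/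
lemma encard_cut_le (hW : Cluster P src tgt C W r) (hPF : P ⊆ F) (hGF : G ⊆ F)
    (hG : ∀ A ∈ W, A ≠ C → (cut G src tgt {A}).encard ≤ 1 ∨
      (cut F src tgt {A}).encard ≤ 2 ∧ ∀ p ∈ P, tgt p = A → p ∈ G) :
    (cut G src tgt W).encard ≤ (cut G src tgt {C}).encard + r := by
  induction hW with
  | root => simp
  | @attach W r A p hW hA hp hlink ih =>
    have ih := ih fun D hD => hG D (Or.inr hD)
    rw [Nat.cast_add_one, ← add_assoc]
    rcases hG A (Or.inl rfl) (fun h => hA (h ▸ hW.root_mem)) with hone | ⟨htwo, hattach⟩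
    · calc (cut G src tgt (insert A W)).encard
          ≤ (cut G src tgt W ∪ cut G src tgt {A}).encard :=
            Set.encard_le_encard cut_insert_subset
        _ ≤ (cut G src tgt W).encard + (cut G src tgt {A}).encard := Set.encard_union_le _ _
        _ ≤ _ := by gcongr
    · have hp_mem : p ∈ cut G src tgt W ∪ cut F src tgt {A} := by
        rcases hlink with ⟨hsrc, rfl⟩ | ⟨rfl, htgt⟩
        · exact Or.inl ⟨hattach p hp rfl, hsrc, hA⟩
        · exact Or.inr ⟨hPF hp, rfl, fun h => hA (h ▸ htgt)⟩
      refine (ENat.add_le_add_iff_right ENat.one_ne_top).1 ?_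
      calc (cut G src tgt (insert A W)).encard + 1
          ≤ (cut G src tgt W).encard + (cut F src tgt {A}).encard :=
            encard_add_one_le_of_subset_union
              (cut_insert_subset.trans (Set.union_subset_union_right _ (cut_mono hGF)))
              hlink.notMem_cut_insert hp_mem
        _ ≤ (cut G src tgt {C}).encard + r + 2 := by gcongr
        _ = (cut G src tgt {C}).encard + r + 1 + 1 := by rw [add_assoc _ 1 1, one_add_one_eq_two]

end Cluster

end Cluster

section Layering

variable {E N : Type*} {n : ℕ} {F G P Q B : Set E} {src tgt : E → N} {C D : N} {W : Set N} {r : ℕ}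

/-- A level function on a type of nodes with a unique node `bot` at level `0` and a unique node
`top` at level at least `n`. -/
structure Layering (N : Type*) (n : ℕ) where
  /-- The level of a node. -/
  level : N → ℕ
  /-- The node at level `0`. -/
  bot : N
  /-- The node at level at least `n`. -/
  top : N
  level_eq_zero_iff {D : N} : level D = 0 ↔ D = bot
  le_level_iff {D : N} : n ≤ level D ↔ D = top

namespace Layering

variable {Λ : Layering N n}

/-- A node other than the two boundary nodes. -/
def Inner (Λ : Layering N n) (D : N) : Prop := D ≠ Λ.bot ∧ D ≠ Λ.top

/-- The invariant of the horizontal player's strategy, for the digraph with edge set `F`: along an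
edge the level increases by at most one and never decreases except from level `1` to level `0`,
and at every inner node at most two edges leave, at most two edges enter, and at most one edge
enters from a lower level. -/
structure IsLayered (Λ : Layering N n) (F : Set E) (src tgt : E → N) : Prop where
  tgt_le {e : E} : e ∈ F → Λ.level (tgt e) ≤ Λ.level (src e) + 1
  src_le {e : E} : e ∈ F → Λ.level (src e) ≤ max 1 (Λ.level (tgt e))
  out_le {D : N} : Λ.Inner D → (cut F src tgt {D}).encard ≤ 2
  in_le {D : N} : Λ.Inner D → (cut F tgt src {D}).encard ≤ 2
  lower_in_le {D : N} : Λ.Inner D →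
    (cut {e ∈ F | Λ.level (src e) < Λ.level D} tgt src {D}).encard ≤ 1

lemma IsLayered.anti (hF : Λ.IsLayered F src tgt) (hGF : G ⊆ F) : Λ.IsLayered G src tgt where
  tgt_le he := hF.tgt_le (hGF he)
  src_le he := hF.src_le (hGF he)
  out_le hD := (Set.encard_le_encard (cut_mono hGF)).trans (hF.out_le hD)
  in_le hD := (Set.encard_le_encard (cut_mono hGF)).trans (hF.in_le hD)
  lower_in_le hD := (Set.encard_le_encard (cut_sep_mono hGF)).trans (hF.lower_in_le hD)

end Layering

section Contract

open Classical in
/-- The map on nodes contracting the set `W` to its element `C`. -/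
noncomputable def contract (W : Set N) (C D : N) : N := if D ∈ W then C else D

lemma contract_of_mem (h : D ∈ W) : contract W C D = C := if_pos h

lemma contract_of_notMem (h : D ∉ W) : contract W C D = D := if_neg h

lemma contract_eq_self_iff (hC : C ∈ W) : contract W C D = C ↔ D ∈ W := by
  by_cases h : D ∈ W
  · simp [contract_of_mem h, h]
  · simp [contract_of_notMem h, h, show D ≠ C from fun hD => h (hD ▸ hC)]

lemma contract_eq_iff_of_ne (hD : D ≠ C) {A : N} : contract W C A = D ↔ A ∉ W ∧ A = D := by
  by_cases h : A ∈ W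
  · simp [contract_of_mem h, h, hD.symm]
  · simp [contract_of_notMem h, h]

lemma cut_contract_self (hC : C ∈ W) :
    cut F (contract W C ∘ src) (contract W C ∘ tgt) {C} = cut F src tgt W := by
  ext e
  simp only [cut, Function.comp_apply, Set.mem_singleton_iff, contract_eq_self_iff hC]

lemma cut_contract_subset_of_ne (hD : D ≠ C) :
    cut F (contract W C ∘ src) (contract W C ∘ tgt) {D} ⊆ cut F src tgt {D} := by
  rintro e ⟨heF, hsrc, htgt⟩
  obtain ⟨-, rfl⟩ := (contract_eq_iff_of_ne hD).1 hsrc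
  exact ⟨heF, rfl, fun h => htgt ((congrArg (contract W C) h).trans hsrc)⟩

end Contract

namespace Layering

variable {Λ : Layering N n}

lemma cut_lower_contract_subset (hC : C ∈ W) :
    cut {e ∈ F | Λ.level (contract W C (src e)) < Λ.level C}
        (contract W C ∘ tgt) (contract W C ∘ src) {C} ⊆
      cut {e ∈ F | Λ.level (src e) < Λ.level C} tgt src W := by
  rw [cut_contract_self hC]
  rintro e ⟨⟨heF, hlow⟩, htgt, hsrc⟩
  rw [contract_of_notMem hsrc] at hlow
  exact ⟨⟨heF, hlow⟩, htgt, hsrc⟩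

lemma cut_lower_contract_subset_of_ne (hD : D ≠ C)
    (hlow : ∀ e ∈ cut F src tgt W, Λ.level C < Λ.level (tgt e) →
      Λ.level (src e) < Λ.level (tgt e)) :
    cut {e ∈ F | Λ.level (contract W C (src e)) < Λ.level D}
        (contract W C ∘ tgt) (contract W C ∘ src) {D} ⊆
      cut {e ∈ F | Λ.level (src e) < Λ.level D} tgt src {D} := by
  intro e he
  obtain ⟨htgt, rfl⟩ := (contract_eq_iff_of_ne hD).1 he.2.1
  obtain ⟨⟨heF, hlt⟩, hcut⟩ := cut_contract_subset_of_ne hD he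
  refine ⟨⟨heF, ?_⟩, hcut⟩
  by_cases hsrc : src e ∈ W
  · rw [contract_of_mem hsrc] at hlt
    exact hlow e ⟨heF, hsrc, htgt⟩ hlt
  · rwa [contract_of_notMem hsrc] at hlt

lemma isLayered_contract (hF : Λ.IsLayered F src tgt) (hC : C ∈ W)
    (hout : ∀ e ∈ cut F src tgt W, Λ.level (tgt e) ≤ Λ.level C + 1 ∧
      Λ.level C ≤ max 1 (Λ.level (tgt e)) ∧
      (Λ.level C < Λ.level (tgt e) → Λ.level (src e) < Λ.level (tgt e)))
    (hin : ∀ e ∈ cut F tgt src W, Λ.level C ≤ Λ.level (src e) + 1 ∧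
      Λ.level (src e) ≤ max 1 (Λ.level C))
    (hdeg : Λ.Inner C → (cut F src tgt W).encard ≤ 2 ∧ (cut F tgt src W).encard ≤ 2 ∧
      (cut {e ∈ F | Λ.level (src e) < Λ.level C} tgt src W).encard ≤ 1) :
    Λ.IsLayered F (contract W C ∘ src) (contract W C ∘ tgt) where
  tgt_le {e} he := by
    by_cases hsrc : src e ∈ W <;> by_cases htgt : tgt e ∈ W <;>
      simp only [Function.comp_apply, contract_of_mem, contract_of_notMem, hsrc, htgt,
        not_false_eq_true]
    exacts [Nat.le_succ _, (hout e ⟨he, hsrc, htgt⟩).1, (hin e ⟨he, htgt, hsrc⟩).1, hF.tgt_le he]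
  src_le {e} he := by
    by_cases hsrc : src e ∈ W <;> by_cases htgt : tgt e ∈ W <;>
      simp only [Function.comp_apply, contract_of_mem, contract_of_notMem, hsrc, htgt,
        not_false_eq_true]
    exacts [le_max_right _ _, (hout e ⟨he, hsrc, htgt⟩).2.1, (hin e ⟨he, htgt, hsrc⟩).2,
      hF.src_le he]
  out_le {D} hD := by
    by_cases h : D = C
    · rw [h, cut_contract_self hC]
      exact (hdeg (h ▸ hD)).1
    · exact (Set.encard_le_encard (cut_contract_subset_of_ne h)).trans (hF.out_le hD)
  in_le {D} hD := by
    by_cases h : D = C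
    · rw [h, cut_contract_self hC]
      exact (hdeg (h ▸ hD)).2.1
    · exact (Set.encard_le_encard (cut_contract_subset_of_ne h)).trans (hF.in_le hD)
  lower_in_le {D} hD := by
    by_cases h : D = C
    · subst h
      exact (Set.encard_le_encard (cut_lower_contract_subset hC)).trans (hdeg hD).2.2
    · exact (Set.encard_le_encard (cut_lower_contract_subset_of_ne h fun e he =>
        (hout e he).2.2)).trans (hF.lower_in_le hD)

/-- The reply `B` of the horizontal player to the claimed edges `P`, as far as the part `Q` of `P`
is concerned: `B` has at most two edges for each edge of `Q`, and its removal allows `f` to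
contract the edges of `Q` while preserving the invariant. -/
structure IsReply (Λ : Layering N n) (F : Set E) (src tgt : E → N) (P Q B : Set E)
    (f : N → N) : Prop where
  subset : B ⊆ F \ P
  encard_le : B.encard ≤ 2 * Q.encard
  map_bot : f Λ.bot = Λ.bot
  map_top : f Λ.top = Λ.top
  isLayered : Λ.IsLayered ((F \ Q) \ B) (f ∘ src) (f ∘ tgt)
  map_src_eq {e : E} : e ∈ Q → f (src e) = f (tgt e)

lemma isReply_contract (hW : Cluster P src tgt C W r)
    (hclosed : ∀ p ∈ P, src p ∈ W ↔ tgt p ∈ W)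
    (hB : B ⊆ cut F src tgt W ∪ cut F tgt src W) (hBr : B.encard ≤ 2 * r)
    (hbot : Λ.bot ∈ W → C = Λ.bot) (htop : Λ.top ∈ W → C = Λ.top)
    (hlay : Λ.IsLayered (F \ B) (contract W C ∘ src) (contract W C ∘ tgt)) :
    Λ.IsReply F src tgt P (Cluster.internal P src tgt W) B (contract W C) where
  subset e he := by
    rcases hB he with ⟨heF, hin, hout⟩ | ⟨heF, hin, hout⟩
    exacts [⟨heF, fun heP => hout ((hclosed e heP).1 hin)⟩,
      ⟨heF, fun heP => hout ((hclosed e heP).2 hin)⟩]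
  encard_le := hBr.trans (by gcongr; exact hW.le_encard_internal)
  map_bot := by
    by_cases h : Λ.bot ∈ W
    exacts [(contract_of_mem h).trans (hbot h), contract_of_notMem h]
  map_top := by
    by_cases h : Λ.top ∈ W
    exacts [(contract_of_mem h).trans (htop h), contract_of_notMem h]
  isLayered := hlay.anti (Set.sdiff_subset_sdiff_left Set.sdiff_subset)
  map_src_eq he := (contract_of_mem he.2.1).trans (contract_of_mem he.2.2).symm

lemma IsReply.comp {B₁ B₂ : Set E} {f g : N → N} (hsub : Q ⊆ P)
    (hf : Λ.IsReply F src tgt P Q B₁ f)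
    (hg : Λ.IsReply ((F \ Q) \ B₁) (f ∘ src) (f ∘ tgt) (P \ Q) (P \ Q) B₂ g) :
    Λ.IsReply F src tgt P P (B₁ ∪ B₂) (g ∘ f) where
  subset := by
    refine Set.union_subset hf.subset fun e he => ?_
    obtain ⟨⟨⟨heF, heQ⟩, -⟩, hePQ⟩ := hg.subset he
    exact ⟨heF, fun heP => hePQ ⟨heP, heQ⟩⟩
  encard_le :=
    calc (B₁ ∪ B₂).encard ≤ B₁.encard + B₂.encard := Set.encard_union_le _ _
      _ ≤ 2 * Q.encard + 2 * (P \ Q).encard := add_le_add hf.encard_le hg.encard_le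
      _ = 2 * P.encard := by
        rw [← mul_add, add_comm, Set.encard_sdiff_add_encard_of_subset hsub]
  map_bot := by rw [Function.comp_apply, hf.map_bot, hg.map_bot]
  map_top := by rw [Function.comp_apply, hf.map_top, hg.map_top]
  isLayered := hg.isLayered.anti (by
    rintro e ⟨⟨heF, heP⟩, heB⟩
    exact ⟨⟨⟨⟨heF, fun heQ => heP (hsub heQ)⟩, fun h => heB (Or.inl h)⟩, fun h => heP h.1⟩,
      fun h => heB (Or.inr h)⟩)
  map_src_eq {e} he := by
    by_cases heQ : e ∈ Q
    exacts [congrArg g (hf.map_src_eq heQ), hg.map_src_eq ⟨he, heQ⟩]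

lemma IsLayered.level_le_of_mem_cluster (hF : Λ.IsLayered F src tgt) (hPF : P ⊆ F)
    (hW : Cluster P src tgt C W r) {A : N} (hA : A ∈ W) : Λ.level A ≤ Λ.level C + r := by
  induction hW generalizing A with
  | root => exact (congrArg Λ.level hA).le
  | @attach W r D p _ _ hp hlink ih =>
    rcases hA with rfl | hA
    · have hup := hF.tgt_le (hPF hp)
      have hdown := hF.src_le (hPF hp)
      rcases hlink with ⟨hW, rfl⟩ | ⟨rfl, hW⟩ <;> have := ih hW <;> omega
    · exact (ih hA).trans (by omega)

/-- The edges that the horizontal player claims when `W` is contracted to the bottom node: those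
that leave `W` from a node other than the bottom, and those that enter `W` from level at least
`2`. -/
def botBoundary (Λ : Layering N n) (F : Set E) (src tgt : E → N) (W : Set N) : Set E :=
  cut {e ∈ F | src e ≠ Λ.bot} src tgt W ∪ cut {e ∈ F | 2 ≤ Λ.level (src e)} tgt src W

lemma botBoundary_insert_subset {A : N} :
    Λ.botBoundary F src tgt (insert A W) ⊆ Λ.botBoundary F src tgt W ∪
      (cut F src tgt {A} ∪ cut {e ∈ F | 2 ≤ Λ.level (src e)} tgt src {A}) := by
  rintro e (he | he) <;> rcases cut_insert_subset he with he | he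
  exacts [Or.inl (Or.inl he), Or.inr (Or.inl (cut_mono (Set.sep_subset _ _) he)),
    Or.inl (Or.inr he), Or.inr (Or.inr he)]

lemma IsLayered.encard_botBoundary_insert_le_of_level_lt_two (hF : Λ.IsLayered F src tgt) {A : N}
    (hA : Λ.Inner A) (hlow : Λ.level A < 2) :
    (Λ.botBoundary F src tgt (insert A W)).encard ≤ (Λ.botBoundary F src tgt W).encard + 2 := by
  have hempty : cut {e ∈ F | 2 ≤ Λ.level (src e)} tgt src {A} = ∅ := by
    refine Set.eq_empty_of_forall_notMem fun e ⟨⟨heF, hsrc⟩, htgt, _⟩ => ?_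
    have := hF.src_le heF
    rw [Set.mem_singleton_iff.1 htgt] at this
    omega
  calc (Λ.botBoundary F src tgt (insert A W)).encard
      ≤ (Λ.botBoundary F src tgt W ∪ cut F src tgt {A}).encard :=
        Set.encard_le_encard (botBoundary_insert_subset.trans (by rw [hempty, Set.union_empty]))
    _ ≤ (Λ.botBoundary F src tgt W).encard + (cut F src tgt {A}).encard := Set.encard_union_le _ _
    _ ≤ _ := by gcongr; exact hF.out_le hA

/-- Up to four edges at `A` become boundary edges, but the edge linking `A` to `W` is counted both
among them and in the old boundary, and it is not in the new one. -/
lemma IsLayered.encard_botBoundary_insert_le_of_two_le_level (hF : Λ.IsLayered F src tgt)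
    {A : N} {p : E} (hA : Λ.Inner A) (hhigh : 2 ≤ Λ.level A) (hAW : A ∉ W) (hp : p ∈ F)
    (hlink : Links src tgt p A W) :
    (Λ.botBoundary F src tgt (insert A W)).encard ≤ (Λ.botBoundary F src tgt W).encard + 2 := by
  have hp_mem : p ∈ Λ.botBoundary F src tgt W ∩ (cut F src tgt {A} ∪ cut F tgt src {A}) := by
    rcases hlink with ⟨hsrc, rfl⟩ | ⟨rfl, htgt⟩
    · have hsrc_ne : src p ≠ Λ.bot := fun h => by
        have := hF.tgt_le hp
        rw [Λ.level_eq_zero_iff.2 h] at this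
        omega
      exact ⟨Or.inl ⟨⟨hp, hsrc_ne⟩, hsrc, hAW⟩, Or.inr ⟨hp, rfl, fun h => hAW (h ▸ hsrc)⟩⟩
    · exact ⟨Or.inr ⟨⟨hp, hhigh⟩, htgt, hAW⟩, Or.inl ⟨hp, rfl, fun h => hAW (h ▸ htgt)⟩⟩
  have hp_notMem : p ∉ Λ.botBoundary F src tgt (insert A W) := fun h =>
    h.elim hlink.notMem_cut_insert hlink.symm.notMem_cut_insert
  have hsub : Λ.botBoundary F src tgt (insert A W) ⊆
      Λ.botBoundary F src tgt W ∪ (cut F src tgt {A} ∪ cut F tgt src {A}) :=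
    botBoundary_insert_subset.trans (Set.union_subset_union_right _
      (Set.union_subset_union_right _ (cut_mono (Set.sep_subset _ _))))
  refine (ENat.add_le_add_iff_right (ENat.natCast_ne_top 2)).1 ?_
  calc (Λ.botBoundary F src tgt (insert A W)).encard + (2 : ℕ)
      = (Λ.botBoundary F src tgt (insert A W)).encard + 1 + 1 := by
        rw [add_assoc, one_add_one_eq_two]; rfl
    _ ≤ (Λ.botBoundary F src tgt W).encard + (cut F src tgt {A} ∪ cut F tgt src {A}).encard :=
        encard_add_two_le_of_subset_union hsub hp_notMem hp_mem
    _ ≤ (Λ.botBoundary F src tgt W).encard + (2 + 2) := by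
        gcongr
        exact (Set.encard_union_le _ _).trans (add_le_add (hF.out_le hA) (hF.in_le hA))
    _ = _ := (add_assoc _ _ _).symm

lemma IsLayered.encard_botBoundary_le (hF : Λ.IsLayered F src tgt) (hPF : P ⊆ F)
    (hW : Cluster P src tgt Λ.bot W r) (htop : Λ.top ∉ W) :
    (Λ.botBoundary F src tgt W).encard ≤ 2 * r := by
  induction hW with
  | root =>
    have hempty : Λ.botBoundary F src tgt {Λ.bot} = ∅ := by
      refine Set.eq_empty_of_forall_notMem ?_
      rintro e (⟨⟨-, hne⟩, hsrc, -⟩ | ⟨⟨heF, hhigh⟩, htgt, -⟩)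
      · exact hne hsrc
      · have := hF.src_le heF
        rw [Λ.level_eq_zero_iff.2 htgt] at this
        omega
    simp [hempty]
  | @attach W r A p hW hA hp hlink ih =>
    have hinner : Λ.Inner A :=
      ⟨fun h => hA (h ▸ hW.root_mem), fun h => htop (Or.inl h.symm)⟩
    calc (Λ.botBoundary F src tgt (insert A W)).encard
        ≤ (Λ.botBoundary F src tgt W).encard + 2 := by
          rcases Nat.lt_or_ge (Λ.level A) 2 with hlow | hhigh
          exacts [hF.encard_botBoundary_insert_le_of_level_lt_two hinner hlow,
            hF.encard_botBoundary_insert_le_of_two_le_level hinner hhigh hA (hPF hp) hlink]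
      _ ≤ 2 * r + 2 := by gcongr; exact ih fun h => htop (Or.inr h)
      _ = 2 * ((r + 1 : ℕ) : ℕ∞) := by push_cast; ring

lemma isLayered_contract_bot (hF : Λ.IsLayered F src tgt) (hbot : Λ.bot ∈ W) :
    Λ.IsLayered (F \ Λ.botBoundary F src tgt W) (contract W Λ.bot ∘ src)
      (contract W Λ.bot ∘ tgt) := by
  have hlevel : Λ.level Λ.bot = 0 := Λ.level_eq_zero_iff.2 rfl
  refine isLayered_contract (hF.anti Set.sdiff_subset) hbot ?_ ?_ fun h => absurd rfl h.1
  · rintro e ⟨⟨heF, heB⟩, hsrc, htgt⟩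
    have hsrc_bot : src e = Λ.bot := by
      by_contra hne
      exact heB (Or.inl ⟨⟨heF, hne⟩, hsrc, htgt⟩)
    have := hF.tgt_le heF
    rw [hsrc_bot] at this ⊢
    omega
  · rintro e ⟨⟨heF, heB⟩, htgt, hsrc⟩
    have hsrc_low : ¬ 2 ≤ Λ.level (src e) := fun h => heB (Or.inr ⟨⟨heF, h⟩, htgt, hsrc⟩)
    omega

/-- The cluster of the bottom node has fewer than `n` edges, too few to reach the top. -/
lemma IsLayered.exists_isReply_of_touches_bot (hF : Λ.IsLayered F src tgt) (hP : P.Finite)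
    (hPF : P ⊆ F) (hPn : P.encard < n) (htouch : ∃ p ∈ P, src p = Λ.bot ∨ tgt p = Λ.bot) :
    ∃ Q ⊆ P, Q.Nonempty ∧ ∃ B f, Λ.IsReply F src tgt P Q B f := by
  obtain ⟨W, r, hW, hclosed⟩ := Cluster.exists_closed src tgt Λ.bot hP
  have hrn : r < n := by exact_mod_cast hW.le_encard.trans_lt hPn
  have htop : Λ.top ∉ W := fun h => by
    have hlevel := hF.level_le_of_mem_cluster hPF hW h
    rw [Λ.level_eq_zero_iff.2 rfl, zero_add] at hlevel
    exact (hlevel.trans_lt hrn).not_ge (Λ.le_level_iff.2 rfl)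
  exact ⟨_, Set.sep_subset _ _, hW.internal_nonempty hclosed htouch, _, _,
    isReply_contract hW hclosed
      (Set.union_subset_union (cut_mono (Set.sep_subset _ _)) (cut_mono (Set.sep_subset _ _)))
      (hF.encard_botBoundary_le hPF hW htop) (fun _ => rfl) (fun h => absurd h htop)
      (isLayered_contract_bot hF hW.root_mem)⟩

lemma IsLayered.encard_cut_le (hF : Λ.IsLayered F src tgt) (hPF : P ⊆ F)
    (hW : Cluster P src tgt C W r) (hinner : ∀ A ∈ W, A ≠ C → Λ.Inner A) (hC : Λ.Inner C) :
    (cut F src tgt W).encard ≤ r + 2 ∧ (cut F tgt src W).encard ≤ r + 2 := by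
  rw [add_comm]
  exact ⟨(hW.encard_cut_le hPF subset_rfl fun A hA hne => Or.inr
      ⟨hF.out_le (hinner A hA hne), fun p hp _ => hPF hp⟩).trans (by gcongr; exact hF.out_le hC),
    (hW.symm.encard_cut_le hPF subset_rfl fun A hA hne => Or.inr
      ⟨hF.in_le (hinner A hA hne), fun p hp _ => hPF hp⟩).trans (by gcongr; exact hF.in_le hC)⟩

lemma IsLayered.encard_cut_lower_le (hF : Λ.IsLayered F src tgt) (hPF : P ⊆ F)
    (hW : Cluster P src tgt C W r) (hinner : ∀ A ∈ W, A ≠ C → Λ.Inner A)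
    (hmax : ∀ A ∈ W, Λ.level A ≤ Λ.level C) (hC : Λ.Inner C) :
    (cut {e ∈ F | Λ.level (src e) < Λ.level C} tgt src W).encard ≤ r + 1 := by
  rw [add_comm]
  refine (hW.symm.encard_cut_le hPF (Set.sep_subset _ _) fun A hA hne => ?_).trans
    (by gcongr; exact hF.lower_in_le hC)
  rcases (hmax A hA).lt_or_eq with hlt | heq
  · exact Or.inr ⟨hF.in_le (hinner A hA hne), fun p hp hsrc => ⟨hPF hp, hsrc ▸ hlt⟩⟩
  · exact Or.inl (heq ▸ hF.lower_in_le (hinner A hA hne))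

lemma IsLayered.cut_drop_eq_empty (hF : Λ.IsLayered F src tgt) {A : N}
    (hA : Λ.level C ≤ max 1 (Λ.level A)) :
    cut {e ∈ F | max 1 (Λ.level (tgt e)) < Λ.level C} src tgt {A} = ∅ := by
  refine Set.eq_empty_of_forall_notMem fun e ⟨⟨heF, hdrop⟩, hsrc, _⟩ => ?_
  have := hF.src_le heF
  rw [Set.mem_singleton_iff.1 hsrc] at this
  omega

lemma IsLayered.encard_cut_drop_le (hF : Λ.IsLayered F src tgt) (hPF : P ⊆ F)
    (hW : Cluster P src tgt C W r) (hinner : ∀ A ∈ W, A ≠ C → Λ.Inner A) :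
    (cut {e ∈ F | max 1 (Λ.level (tgt e)) < Λ.level C} src tgt W).encard ≤ r := by
  refine (hW.encard_cut_le hPF (Set.sep_subset _ _) fun A hA hne => ?_).trans_eq
    (by rw [hF.cut_drop_eq_empty (le_max_right _ _), Set.encard_empty, zero_add])
  rcases le_or_gt (Λ.level C) (max 1 (Λ.level A)) with hhigh | hlow
  · exact Or.inl (by rw [hF.cut_drop_eq_empty hhigh, Set.encard_empty]; exact zero_le)
  · exact Or.inr ⟨hF.out_le (hinner A hA hne), fun p hp htgt => ⟨hPF hp, htgt ▸ hlow⟩⟩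

lemma IsLayered.encard_cut_jump_le (hF : Λ.IsLayered F src tgt) (hPF : P ⊆ F)
    (hW : Cluster P src tgt C W r) (hinner : ∀ A ∈ W, A ≠ C → Λ.Inner A) :
    (cut {e ∈ F | Λ.level (src e) + 1 < Λ.level C} tgt src W).encard ≤ r := by
  have hroot : cut {e ∈ F | Λ.level (src e) + 1 < Λ.level C} tgt src {C} = ∅ := by
    refine Set.eq_empty_of_forall_notMem fun e ⟨⟨heF, hjump⟩, htgt, _⟩ => ?_
    have := hF.tgt_le heF
    rw [Set.mem_singleton_iff.1 htgt] at this
    omega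
  refine (hW.symm.encard_cut_le hPF (Set.sep_subset _ _) fun A hA hne => ?_).trans_eq
    (by rw [hroot, Set.encard_empty, zero_add])
  rcases le_or_gt (Λ.level C) (Λ.level A + 1) with hhigh | hlow
  · refine Or.inl ((Set.encard_le_encard ?_).trans (hF.lower_in_le (hinner A hA hne)))
    exact cut_mono fun e he => ⟨he.1, Nat.lt_of_succ_lt_succ (he.2.trans_le hhigh)⟩
  · exact Or.inr ⟨hF.in_le (hinner A hA hne), fun p hp hsrc => ⟨hPF hp, hsrc ▸ hlow⟩⟩

lemma IsLayered.exists_out_block (hF : Λ.IsLayered F src tgt) (hPF : P ⊆ F)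
    (hW : Cluster P src tgt C W r) (hinner : ∀ A ∈ W, A ≠ C → Λ.Inner A) :
    ∃ B, cut {e ∈ F | max 1 (Λ.level (tgt e)) < Λ.level C} src tgt W ⊆ B ∧
      B ⊆ cut F src tgt W ∧ B.encard ≤ r ∧ (Λ.Inner C → (cut F src tgt W \ B).encard ≤ 2) := by
  have hsub : cut {e ∈ F | max 1 (Λ.level (tgt e)) < Λ.level C} src tgt W ⊆ cut F src tgt W :=
    cut_mono (Set.sep_subset _ _)
  have hdrop := hF.encard_cut_drop_le hPF hW hinner
  by_cases hC : Λ.Inner C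
  · obtain ⟨B, hB⟩ :=
      exists_subset_encard_sdiff_le hsub hdrop (hF.encard_cut_le hPF hW hinner hC).1
    exact ⟨B, hB.1, hB.2.1, hB.2.2.1, fun _ => hB.2.2.2⟩
  · exact ⟨_, subset_rfl, hsub, hdrop, fun h => absurd h hC⟩

lemma IsLayered.exists_in_block (hF : Λ.IsLayered F src tgt) (hPF : P ⊆ F)
    (hW : Cluster P src tgt C W r) (hinner : ∀ A ∈ W, A ≠ C → Λ.Inner A)
    (hmax : ∀ A ∈ W, Λ.level A ≤ Λ.level C) :
    ∃ B, cut {e ∈ F | Λ.level (src e) + 1 < Λ.level C} tgt src W ⊆ B ∧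
      B ⊆ cut F tgt src W ∧ B.encard ≤ r ∧ (Λ.Inner C → (cut F tgt src W \ B).encard ≤ 2 ∧
        (cut {e ∈ F | Λ.level (src e) < Λ.level C} tgt src W \ B).encard ≤ 1) := by
  have hjump_lower : cut {e ∈ F | Λ.level (src e) + 1 < Λ.level C} tgt src W ⊆
      cut {e ∈ F | Λ.level (src e) < Λ.level C} tgt src W :=
    cut_mono fun e he => ⟨he.1, (Nat.lt_succ_self _).trans he.2⟩
  have hlower : cut {e ∈ F | Λ.level (src e) < Λ.level C} tgt src W ⊆ cut F tgt src W :=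
    cut_mono (Set.sep_subset _ _)
  have hjump := hF.encard_cut_jump_le hPF hW hinner
  by_cases hC : Λ.Inner C
  · obtain ⟨B₁, hjump_sub, hB₁, hB₁r, hlower_le⟩ := exists_subset_encard_sdiff_le hjump_lower hjump
      (hF.encard_cut_lower_le hPF hW hinner hmax hC)
    obtain ⟨B, hB₁B, hB, hBr, hin_le⟩ := exists_subset_encard_sdiff_le (hB₁.trans hlower) hB₁r
      (hF.encard_cut_le hPF hW hinner hC).2
    exact ⟨B, hjump_sub.trans hB₁B, hB, hBr, fun _ => ⟨hin_le,
      (Set.encard_le_encard (Set.sdiff_subset_sdiff_right hB₁B)).trans hlower_le⟩⟩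
  · exact ⟨_, subset_rfl, hjump_lower.trans hlower, hjump, fun h => absurd h hC⟩

/-- The `2r` edges of the reply: `r` repair the outgoing edges, `r` the incoming ones. -/
lemma IsLayered.exists_block (hF : Λ.IsLayered F src tgt) (hPF : P ⊆ F)
    (hW : Cluster P src tgt C W r) (hinner : ∀ A ∈ W, A ≠ C → Λ.Inner A)
    (hmax : ∀ A ∈ W, Λ.level A ≤ Λ.level C) :
    ∃ B ⊆ cut F src tgt W ∪ cut F tgt src W, B.encard ≤ 2 * r ∧
      Λ.IsLayered (F \ B) (contract W C ∘ src) (contract W C ∘ tgt) := by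
  obtain ⟨Bout, hdrop, hBout, hBout_le, hout_le⟩ := hF.exists_out_block hPF hW hinner
  obtain ⟨Bin, hjump, hBin, hBin_le, hin_le⟩ := hF.exists_in_block hPF hW hinner hmax
  refine ⟨Bout ∪ Bin, Set.union_subset_union hBout hBin, ?_,
    isLayered_contract (hF.anti Set.sdiff_subset) hW.root_mem ?_ ?_ fun hC => ⟨?_, ?_, ?_⟩⟩
  · exact (Set.encard_union_le _ _).trans ((add_le_add hBout_le hBin_le).trans_eq (two_mul _).symm)
  · rintro e ⟨⟨heF, heB⟩, hsrc, htgt⟩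
    have hsmall : ¬ max 1 (Λ.level (tgt e)) < Λ.level C :=
      fun h => heB (Or.inl (hdrop ⟨⟨heF, h⟩, hsrc, htgt⟩))
    have hup := hF.tgt_le heF
    have hsrc_le := hmax _ hsrc
    exact ⟨by omega, by omega, by omega⟩
  · rintro e ⟨⟨heF, heB⟩, htgt, hsrc⟩
    have hsmall : ¬ Λ.level (src e) + 1 < Λ.level C :=
      fun h => heB (Or.inr (hjump ⟨⟨heF, h⟩, htgt, hsrc⟩))
    have hdown := hF.src_le heF
    have htgt_le := hmax _ htgt
    exact ⟨by omega, by omega⟩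
  · refine (Set.encard_le_encard ?_).trans (hout_le hC)
    exact fun e he => ⟨⟨he.1.1, he.2⟩, fun h => he.1.2 (Or.inl h)⟩
  · refine (Set.encard_le_encard ?_).trans (hin_le hC).1
    exact fun e he => ⟨⟨he.1.1, he.2⟩, fun h => he.1.2 (Or.inr h)⟩
  · refine (Set.encard_le_encard ?_).trans (hin_le hC).2
    exact fun e he => ⟨⟨⟨he.1.1.1, he.1.2⟩, he.2⟩, fun h => he.1.1.2 (Or.inr h)⟩

lemma IsLayered.exists_isReply_of_not_touches_bot (hF : Λ.IsLayered F src tgt) (hP : P.Finite)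
    (hPF : P ⊆ F) (hne : P.Nonempty) (htouch : ¬ ∃ p ∈ P, src p = Λ.bot ∨ tgt p = Λ.bot) :
    ∃ Q ⊆ P, Q.Nonempty ∧ ∃ B f, Λ.IsReply F src tgt P Q B f := by
  obtain ⟨C, hC, hmax_endpoint⟩ := Set.exists_max_image (src '' P ∪ tgt '' P) Λ.level
    ((hP.image src).union (hP.image tgt)) (hne.image src).inl
  have hC_touch : ∃ p ∈ P, src p = C ∨ tgt p = C := by
    rcases hC with ⟨p, hp, h⟩ | ⟨p, hp, h⟩
    exacts [⟨p, hp, Or.inl h⟩, ⟨p, hp, Or.inr h⟩]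
  obtain ⟨W, r, hW, hclosed⟩ := Cluster.exists_closed src tgt C hP
  have hendpoint {A : N} (hA : A ∈ W) : ∃ p ∈ P, src p = A ∨ tgt p = A :=
    (hW.eq_root_or_exists_endpoint hA).elim (fun h => h ▸ hC_touch) id
  have hmax (A : N) (hA : A ∈ W) : Λ.level A ≤ Λ.level C := by
    obtain ⟨p, hp, h⟩ := hendpoint hA
    exact hmax_endpoint A (h.imp (⟨p, hp, ·⟩) (⟨p, hp, ·⟩))
  have hbot : Λ.bot ∉ W := fun h => htouch (hendpoint h)
  have htop (h : Λ.top ∈ W) : C = Λ.top :=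
    Λ.le_level_iff.1 ((Λ.le_level_iff.2 rfl).trans (hmax _ h))
  have hinner (A : N) (hA : A ∈ W) (hAC : A ≠ C) : Λ.Inner A :=
    ⟨fun h => hbot (h ▸ hA), fun h => hAC (h.trans (htop (h ▸ hA)).symm)⟩
  obtain ⟨B, hB, hBr, hlay⟩ := hF.exists_block hPF hW hinner hmax
  exact ⟨_, Set.sep_subset _ _, hW.internal_nonempty hclosed hC_touch, _, _,
    isReply_contract hW hclosed hB hBr (fun h => absurd h hbot) htop hlay⟩

theorem IsLayered.exists_isReply (hF : Λ.IsLayered F src tgt) (hP : P.Finite) (hPF : P ⊆ F)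
    (hPn : P.encard < n) : ∃ B f, Λ.IsReply F src tgt P P B f := by
  induction hcard : P.ncard using Nat.strong_induction_on generalizing P F src tgt with
  | _ k ih =>
    subst hcard
    rcases P.eq_empty_or_nonempty with rfl | hne
    · exact ⟨∅, id, Set.empty_subset _, by simp, rfl, rfl, by simpa using hF,
        fun h => absurd h (Set.notMem_empty _)⟩
    obtain ⟨Q, hQP, hQ, B₁, f, hf⟩ : ∃ Q ⊆ P, Q.Nonempty ∧ ∃ B f, Λ.IsReply F src tgt P Q B f := by
      by_cases htouch : ∃ p ∈ P, src p = Λ.bot ∨ tgt p = Λ.bot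
      exacts [hF.exists_isReply_of_touches_bot hP hPF hPn htouch,
        hF.exists_isReply_of_not_touches_bot hP hPF hne htouch]
    obtain ⟨B₂, g, hg⟩ := ih (P \ Q).ncard
      (Set.ncard_lt_ncard (sdiff_lt hQP hQ.ne_empty) hP) hf.isLayered
      (hP.subset Set.sdiff_subset)
      (fun e he => ⟨⟨hPF he.1, he.2⟩, fun h => (hf.subset h).2 he.1⟩)
      ((Set.encard_le_encard Set.sdiff_subset).trans_lt hPn) rfl
    exact ⟨B₁ ∪ B₂, g ∘ f, hf.comp hQP hg⟩

end Layering

end Layering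

section Strip

variable {n : ℕ}

/-- A node of the digraph of dual edges of the strip: a dual vertex strictly between the two
sides of the strip, or one of the nodes `bot` and `top` to which the dual vertices below and above
the strip are identified. -/
inductive StripNode (n : ℕ)
  | bot
  | top
  | inner (v : DVtx) (pos : 0 < v.2) (lt : v.2 < n)

namespace StripNode

/-- The height of a node above the lower side of the strip. -/
def level : StripNode n → ℕ
  | bot => 0
  | top => n
  | inner v _ _ => v.2.toNat

/-- The node represented by a dual vertex. -/
def ofDual (n : ℕ) (v : DVtx) : StripNode n :=
  if hbot : v.2 ≤ 0 then bot
  else if htop : n ≤ v.2 then top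
  else inner v (not_le.1 hbot) (not_le.1 htop)

lemma ofDual_eq_bot {v : DVtx} (hv : v.2 ≤ 0) : ofDual n v = bot := dif_pos hv

lemma ofDual_eq_top {v : DVtx} (hn : 0 < n) (hv : n ≤ v.2) : ofDual n v = top := by
  rw [ofDual, dif_neg (by omega), dif_pos hv]

lemma ofDual_eq_inner {v w : DVtx} {pos : 0 < v.2} {lt : v.2 < n}
    (h : ofDual n w = inner v pos lt) : w = v := by
  unfold ofDual at h
  split_ifs at h
  exact inner.inj h

lemma level_ofDual (v : DVtx) : (ofDual n v).level = min n v.2.toNat := by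
  unfold ofDual
  split_ifs <;> simp only [level] <;> omega

end StripNode

/-- The height of the nodes of the strip, as a layering. -/
def stripLayering (hn : 0 < n) : Layering (StripNode n) n where
  level := StripNode.level
  bot := .bot
  top := .top
  level_eq_zero_iff {D} := by
    cases D <;> simp only [StripNode.level, reduceCtorEq, iff_false] <;> omega
  le_level_iff {D} := by
    cases D <;> simp only [StripNode.level, reduceCtorEq, iff_false, iff_true] <;> omega

/-- The node where the dual edge of `e`, directed to the right or upwards, starts. -/
def stripSrc (n : ℕ) (e : Edge) : StripNode n := .ofDual n (ends (dualEdge e)).1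

/-- The node where the dual edge of `e`, directed to the right or upwards, ends. -/
def stripTgt (n : ℕ) (e : Edge) : StripNode n := .ofDual n (ends (dualEdge e)).2

lemma cut_stripSrc_inner_subset {x y : ℤ} {pos : 0 < y} {lt : y < n} {F : Set Edge} :
    cut F (stripSrc n) (stripTgt n) {.inner (x, y) pos lt} ⊆
      {((x, y + 1), true), ((x + 1, y), false)} := by
  rintro ⟨⟨x', y'⟩, b⟩ ⟨-, hsrc, -⟩
  have hdual := StripNode.ofDual_eq_inner hsrc
  cases b <;>
    simp only [ends, dualEdge, if_true, Bool.false_eq_true, Bool.true_eq_false, if_false,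
      sub_add_cancel, Prod.mk.injEq, Set.mem_insert_iff, Set.mem_singleton_iff,
      and_true, and_false, or_false, false_or] at hdual ⊢ <;>
    omega

lemma cut_stripTgt_inner_subset {x y : ℤ} {pos : 0 < y} {lt : y < n} {F : Set Edge} :
    cut F (stripTgt n) (stripSrc n) {.inner (x, y) pos lt} ⊆
      {((x, y), true), ((x, y), false)} := by
  rintro ⟨⟨x', y'⟩, b⟩ ⟨-, htgt, -⟩
  have hdual := StripNode.ofDual_eq_inner htgt
  cases b <;>
    simp only [ends, dualEdge, if_true, Bool.false_eq_true, Bool.true_eq_false, if_false,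
      sub_add_cancel, Prod.mk.injEq, Set.mem_insert_iff, Set.mem_singleton_iff,
      and_true, and_false, or_false, false_or] at hdual ⊢ <;>
    omega

lemma level_stripTgt_of_vertical (v : Vtx) :
    (stripTgt n (v, false)).level = (stripSrc n (v, false)).level := by
  simp [stripSrc, stripTgt, StripNode.level_ofDual, ends, dualEdge]

lemma level_stripTgt_eq_or (e : Edge) : (stripTgt n e).level = (stripSrc n e).level ∨
    (stripTgt n e).level = (stripSrc n e).level + 1 := by
  obtain ⟨v, _ | _⟩ := e
  · exact Or.inl (level_stripTgt_of_vertical v)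
  · simp only [stripSrc, stripTgt, StripNode.level_ofDual, ends, dualEdge, if_true,
      Bool.false_eq_true, if_false]
    omega

lemma cut_lower_stripTgt_inner_subset {x y : ℤ} {pos : 0 < y} {lt : y < n} {F : Set Edge} :
    cut {e ∈ F | (stripSrc n e).level < (StripNode.inner (x, y) pos lt).level}
      (stripTgt n) (stripSrc n) {.inner (x, y) pos lt} ⊆ {((x, y), true)} := by
  rintro e he
  obtain ⟨⟨-, hlow⟩, htgt, -⟩ := id he
  rcases cut_stripTgt_inner_subset he with rfl | rfl
  · rfl
  · rw [← level_stripTgt_of_vertical, Set.mem_singleton_iff.1 htgt] at hlow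
    exact absurd hlow (lt_irrefl _)

lemma exists_eq_inner {hn : 0 < n} {D : StripNode n} (hD : (stripLayering hn).Inner D) :
    ∃ x y pos lt, D = .inner (x, y) pos lt := by
  rcases D with _ | _ | ⟨⟨x, y⟩, pos, lt⟩
  exacts [absurd rfl hD.1, absurd rfl hD.2, ⟨x, y, pos, lt, rfl⟩]

lemma isLayered_strip (hn : 0 < n) :
    (stripLayering hn).IsLayered (sInfEdges n) (stripSrc n) (stripTgt n) where
  tgt_le {e} _ := (level_stripTgt_eq_or e).elim (fun h => h.le.trans (Nat.le_succ _)) (·.le)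
  src_le {e} _ := le_max_of_le_right
    ((level_stripTgt_eq_or e).elim (·.ge) fun h => (Nat.le_succ _).trans h.ge)
  out_le {D} hD := by
    obtain ⟨x, y, pos, lt, rfl⟩ := exists_eq_inner hD
    exact (Set.encard_le_encard cut_stripSrc_inner_subset).trans (encard_pair_le _ _)
  in_le {D} hD := by
    obtain ⟨x, y, pos, lt, rfl⟩ := exists_eq_inner hD
    exact (Set.encard_le_encard cut_stripTgt_inner_subset).trans (encard_pair_le _ _)
  lower_in_le {D} hD := by
    obtain ⟨x, y, pos, lt, rfl⟩ := exists_eq_inner hD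
    exact (Set.encard_le_encard cut_lower_stripTgt_inner_subset).trans_eq (Set.encard_singleton _)

lemma sInfEdges_infinite (hn : 0 < n) : (sInfEdges n).Infinite := by
  have hn1 : (1 : ℤ) ≤ n := by exact_mod_cast hn
  exact Set.infinite_of_injective_forall_mem (f := fun x : ℤ => (((x, 1), true) : Edge))
    (fun a b h => by simpa using h) fun x => ⟨le_rfl, hn1, le_rfl, hn1⟩

end Strip

lemma eq_of_forall_cp_eq {α β : Type*} {f : α → β} {l : List α} {v w : α} (hv : l.head? = some v)
    (hw : l.getLast? = some w) (hf : ∀ p ∈ cp l, f p.1 = f p.2) : f v = f w := by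
  induction l generalizing v with
  | nil => simp at hv
  | cons a l ih =>
    obtain rfl : a = v := by simpa using hv
    cases l with
    | nil => exact congrArg f (by simpa using hw)
    | cons b l =>
      exact (hf (a, b) (by simp [cp])).trans
        (ih rfl (by simpa using hw) fun p hp => hf p (List.mem_cons_of_mem _ hp))

section Safe

variable {n : ℕ} {hn : 0 < n} {V K P : Finset Edge}

/-- The positions that the horizontal player maintains, where `V` is the set of edges claimed by
the vertical player and `K` the set of all claimed edges: a map `f` of the nodes fixing the two
boundary nodes contracts the edges of `V` and preserves the layering of the unclaimed edges. -/
def Safe (hn : 0 < n) (V K : Finset Edge) : Prop :=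
  ∃ f : StripNode n → StripNode n, f .bot = .bot ∧ f .top = .top ∧
    (stripLayering hn).IsLayered (sInfEdges n \ K) (f ∘ stripSrc n) (f ∘ stripTgt n) ∧
    ∀ e ∈ V, f (stripSrc n e) = f (stripTgt n e)

namespace Safe

lemma empty (hn : 0 < n) : Safe hn ∅ ∅ :=
  ⟨id, rfl, rfl, (isLayered_strip hn).anti Set.sdiff_subset, by simp⟩

theorem exists_reply (hS : Safe hn V K) (hP : (P : Set Edge) ⊆ sInfEdges n \ K)
    (hPn : P.card < n) :
    ∃ B : Finset Edge, (B : Set Edge) ⊆ sInfEdges n \ ↑(K ∪ P) ∧ B.card = 2 * P.card ∧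
      Safe hn (V ∪ P) (K ∪ P ∪ B) := by
  obtain ⟨f, hf_bot, hf_top, hlay, hf⟩ := hS
  obtain ⟨B₀, g, hg⟩ := hlay.exists_isReply P.finite_toSet hP (by simpa using hPn)
  have hfree : (sInfEdges n \ ↑(K ∪ P)).Infinite :=
    (sInfEdges_infinite hn).sdiff (K ∪ P).finite_toSet
  obtain ⟨B, hB₀B, hB, hBcard⟩ : ∃ B, B₀ ⊆ B ∧ B ⊆ sInfEdges n \ ↑(K ∪ P) ∧
      B.encard = (2 * P.card : ℕ) := by
    refine Set.exists_superset_subset_encard_eq ?_ ?_ (hfree.encard_eq ▸ le_top)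
    · simpa [Set.sdiff_sdiff] using hg.subset
    · simpa using hg.encard_le
  lift B to Finset Edge using Set.finite_of_encard_eq_coe hBcard
  refine ⟨B, hB, by exact_mod_cast hBcard, g ∘ f, ?_, ?_, hg.isLayered.anti ?_, fun e he => ?_⟩
  · exact (congrArg g hf_bot).trans hg.map_bot
  · exact (congrArg g hf_top).trans hg.map_top
  · rw [Set.sdiff_sdiff, Set.sdiff_sdiff]
    push_cast
    rw [← Set.union_assoc]
    exact Set.sdiff_subset_sdiff_right (Set.union_subset_union_right _ hB₀B)
  · rcases Finset.mem_union.1 he with heV | heP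
    exacts [congrArg g (hf e heV), hg.map_src_eq heP]

theorem not_hasDualCrossing (hS : Safe hn V K) : ¬ HasDualCrossing n (dualEdge '' V) := by
  obtain ⟨f, hf_bot, hf_top, -, hf⟩ := hS
  rintro ⟨l, ⟨v, hv, hvn⟩, ⟨w, hw, hw0⟩, hl⟩
  have hconst : f (.ofDual n v) = f (.ofDual n w) := by
    refine eq_of_forall_cp_eq (f := f ∘ StripNode.ofDual n) hv hw fun p hp => ?_
    obtain ⟨-, ⟨e, he, rfl⟩, ⟨hfst, hsnd⟩ | ⟨hfst, hsnd⟩⟩ := hl p hp <;>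
      simp only [Function.comp_apply, ← hfst, ← hsnd]
    exacts [hf e he, (hf e he).symm]
  rw [StripNode.ofDual_eq_top hn hvn.ge, StripNode.ofDual_eq_bot hw0.le, hf_top, hf_bot] at hconst
  cases hconst

end Safe

end Safe

section Game

variable {n q t : ℕ} {σV σH : DStrategy} {h g : List (Finset Edge)} {b : Bool}

lemma even_length_histD : Even (histD σV σH t).length := by
  induction t with
  | zero => exact Even.zero
  | succ t ih => simpa [histD] using ih.add even_two

lemma altUnion_append_of_even (hh : Even h.length) :
    altUnion b (h ++ g) = altUnion b h ∪ altUnion b g := by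
  induction h using List.twoStepInduction with
  | nil => simp [altUnion]
  | singleton x => simp at hh
  | cons_cons x y xs ih _ =>
    have hxs : Even xs.length := by simpa [Nat.even_add_one] using hh
    cases b <;> simp only [List.cons_append, altUnion, ih hxs, Finset.union_assoc]

lemma allClaimed_nil : allClaimed [] = ∅ := rfl

lemma allClaimed_cons {P : Finset Edge} : allClaimed (P :: h) = P ∪ allClaimed h := rfl

lemma allClaimed_append : allClaimed (h ++ g) = allClaimed h ∪ allClaimed g := by
  induction h with
  | nil => simp [allClaimed_nil]
  | cons x xs ih => rw [List.cons_append, allClaimed_cons, ih, allClaimed_cons, Finset.union_assoc]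

/-- `B` is a legal reply of the horizontal player to the last move of the history `h`, and it leads
to a position satisfying `I`, a property of the set of edges claimed by the vertical player and
the set of all claimed edges. -/
def IsGoodReply (n : ℕ) (I : Finset Edge → Finset Edge → Prop) (h : List (Finset Edge))
    (B : Finset Edge) : Prop :=
  (B : Set Edge) ⊆ sInfEdges n \ allClaimed h ∧ B.card = 2 * (h.getLast?.getD ∅).card ∧
    I (altUnion true h) (allClaimed h ∪ B)

theorem exists_strategy_of_invariant {I : Finset Edge → Finset Edge → Prop} (hempty : I ∅ ∅)
    (hreply : ∀ V K P : Finset Edge, I V K → (P : Set Edge) ⊆ sInfEdges n \ K → P.card ≤ q →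
      ∃ B : Finset Edge, (B : Set Edge) ⊆ sInfEdges n \ ↑(K ∪ P) ∧ B.card = 2 * P.card ∧
        I (V ∪ P) (K ∪ P ∪ B)) :
    ∃ σH : DStrategy, ∀ σV, VLegal n q σV σH → HLegal n σV σH ∧
      ∀ t, I (altUnion true (histD σV σH t)) (allClaimed (histD σV σH t)) := by
  let σH : DStrategy := fun h => Classical.epsilon (IsGoodReply n I h)
  refine ⟨σH, fun σV hV => ?_⟩
  have hgood (t : ℕ) (hI : I (altUnion true (histD σV σH t)) (allClaimed (histD σV σH t))) :
      IsGoodReply n I (histD σV σH t ++ [σV (histD σV σH t)])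
        (σH (histD σV σH t ++ [σV (histD σV σH t)])) := by
    obtain ⟨B, hB, hcard, hIB⟩ := hreply _ _ _ hI (hV t).1 (hV t).2.2
    refine Classical.epsilon_spec ⟨B, ?_, ?_, ?_⟩
    · simpa [allClaimed_append, allClaimed_cons, allClaimed_nil] using hB
    · simpa using hcard
    · simpa [allClaimed_append, altUnion_append_of_even even_length_histD, allClaimed_cons,
        allClaimed_nil, altUnion] using hIB
  have hI (t : ℕ) : I (altUnion true (histD σV σH t)) (allClaimed (histD σV σH t)) := by
    induction t with
    | zero => exact hempty
    | succ t ih =>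
      simpa [histD, allClaimed_append, altUnion_append_of_even even_length_histD, allClaimed_cons,
        allClaimed_nil, altUnion, Finset.union_assoc] using (hgood t ih).2.2
  refine ⟨fun t => ⟨(hgood t (hI t)).1, ?_⟩, hI⟩
  simpa using (hgood t (hI t)).2.1

end Game

/-- **Theorem (double-response game).** If `n ≥ q + 1`, then the horizontal player `H`
has a winning strategy for the `q`-double-response game on `S_{∞×n}`: she can forever
prevent the vertical player `V` from claiming a set of edges whose dual edges contain a
top-bottom crossing dual path. -/
theorem horizontal_player_wins_double_response_game
    (n q : ℕ) (hq : 1 ≤ q) (hn : q + 1 ≤ n) :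
    ∃ σH : DStrategy, ∀ σV : DStrategy, VLegal n q σV σH →
      HLegal n σV σH ∧
      ∀ t, ¬ HasDualCrossing n (dualEdge '' ↑(altUnion true (histD σV σH t))) := by
  have hn0 : 0 < n := by omega
  obtain ⟨σH, hσH⟩ := exists_strategy_of_invariant (Safe.empty hn0)
    fun _ _ _ hS hP hPq => hS.exists_reply hP (Nat.lt_of_le_of_lt hPq hn)
  exact ⟨σH, fun σV hV => ⟨(hσH σV hV).1, fun t => ((hσH σV hV).2 t).not_hasDualCrossing⟩⟩

end CrossingGames
end

section
/- Let (G,A,B) be a Shannon game-triple and let p, q, l, T, m be natural numbers. Assume that: (i) the edge set E(G) is partitioned into m pairwise edge-disjoint strips S₁,…,S_m; (ii) for each i there is a local Shannon game-triple (Gᵢ,Aᵢ,Bᵢ) with E(Gᵢ) ⊆ Sᵢ such that any set of Breaker edges defeating Maker in the local game defeats her globally, i.e. for every set E' ⊆ E(Gᵢ), if Gᵢ − E' contains no Aᵢ–Bᵢ crossing path then G − E' contains no A–B crossing path; (iii) for each i, Breaker has a winning strategy for the (p,q)-Shannon switching game on (Gᵢ,Aᵢ,Bᵢ) under the Breaker-First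 rule that ensures his victory within at most T of his turns. Set s = l(p+q+1) − 1. If m ≥ (s(p+1))^T + l(p+1) − 1, then Breaker has a winning strategy for the (l(p+1)−1, lq)-Shannon switching game on (G,A,B). -/
/-!
Breaker treats each strip as an independent local game and runs through `T` stages, each of which
brings many strips one local turn closer to defeat. On every turn of a stage he makes his next
local move in `l` strips that Maker has not touched since the stage began. A strip in which he has
just moved is lost to him only once Maker spends `p + 1` edges on it, so a turn of Breaker creates
slack `l (p + 1)`, while Maker's reply destroys at most `l (p + 1) - 1`. The total slack therefore
grows by at least one per round, and after `(p + 1) k` rounds at least `k` strips survive into the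
next stage. A round uses up at most `l + (l (p + 1) - 1)` untouched strips, so it is enough that a
stage begins with `(l (p + 2) - 1) (p + 1) k` of them. One strip surviving all `T` stages is enough.
-/

namespace ShannonStrips

variable {V E : Type}

/-- `u` is joined to `v` by a walk using only edges from `F`, in the multigraph with
edge-endpoint map `ends`. -/
def Reach (ends : E → V × V) (F : Set E) (u v : V) : Prop :=
  Relation.ReflTransGen
    (fun a b => ∃ e ∈ F,
      ((ends e).1 = a ∧ (ends e).2 = b) ∨ ((ends e).1 = b ∧ (ends e).2 = a)) u v

/-- The edge set `F` contains all the edges of an `A`–`B` crossing path: a path from some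
vertex of `A` to some vertex of `B`. -/
def CrossWin (ends : E → V × V) (A B : Set V) (F : Set E) : Prop :=
  ∃ a ∈ A, ∃ b ∈ B, Reach ends F a b

/-- A strategy: given the list of all moves played so far (oldest first), produce the
next move (a finite set of edges to claim). -/
abbrev Strat (E : Type) : Type := List (Finset E) → Finset E

variable [DecidableEq E]

/-- The union of the moves sitting in positions of the given parity of a history
(`true`: positions 0, 2, 4, …; `false`: positions 1, 3, 5, …). -/
def altUnion : Bool → List (Finset E) → Finset E
  | _, [] => ∅
  | true, mv :: h => mv ∪ altUnion false h
  | false, _ :: h => altUnion true h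

/-- All edges claimed by the player moving first in a history. -/
def firstClaimed (h : List (Finset E)) : Finset E := altUnion true h

/-- All edges claimed by the player moving second in a history. -/
def secondClaimed (h : List (Finset E)) : Finset E := altUnion false h

/-- All edges claimed so far in a history. -/
def allClaimed (h : List (Finset E)) : Finset E := h.foldr (· ∪ ·) ∅

/-- The history of moves (oldest first) after `t` full rounds, when the player moving
first uses strategy `σ` and the player moving second uses strategy `τ`. -/
def hist (σ τ : Strat E) : ℕ → List (Finset E)
  | 0 => []
  | t + 1 =>
    let h := hist σ τ t
    h ++ [σ h, τ (h ++ [σ h])]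

/-- The move `mv` is legal on `board` after the history `h` for a player of bias `k`: it
consists of as-yet-unclaimed edges of the board, exactly `k` of them unless fewer than
`k` unclaimed edges remain, in which case the player claims all of them. -/
def LegalMove (board : Set E) (h : List (Finset E)) (k : ℕ) (mv : Finset E) : Prop :=
  (↑mv : Set E) ⊆ board \ ↑(allClaimed h) ∧
    (mv.card = k ∨ (mv.card < k ∧ board \ ↑(allClaimed h) ⊆ (↑mv : Set E)))

/-- The player moving first (with bias `k`) always moves legally when playing `σ`
against `τ`. -/
def FirstLegal (board : Set E) (k : ℕ) (σ τ : Strat E) : Prop :=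
  ∀ t, LegalMove board (hist σ τ t) k (σ (hist σ τ t))

/-- The player moving second (with bias `k`) always moves legally when playing `τ`
against `σ`. -/
def SecondLegal (board : Set E) (k : ℕ) (σ τ : Strat E) : Prop :=
  ∀ t, LegalMove board (hist σ τ t ++ [σ (hist σ τ t)]) k
    (τ (hist σ τ t ++ [σ (hist σ τ t)]))

/-- Breaker has a winning strategy for the `(p,q)`-Shannon switching game on the board
`board` with distinguished vertex sets `A`, `B` (Maker, moving first, claims `p` edges
per turn aiming to complete an `A`–`B` crossing path; Breaker claims `q` edges per
turn): Breaker can forever prevent Maker's claimed edges from containing an `A`–`B`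
crossing path. -/
def BreakerWinsShannon (ends : E → V × V) (board : Set E) (A B : Set V) (p q : ℕ) : Prop :=
  ∃ τ : Strat E, ∀ σ : Strat E, FirstLegal board p σ τ →
    SecondLegal board q σ τ ∧
      ∀ t, ¬ CrossWin ends A B (↑(firstClaimed (hist σ τ t)) : Set E)

/-- Breaker has a winning strategy for the `(p,q)`-Shannon switching game on `board`
with distinguished sets `A`, `B`, played under the Breaker-First rule (Breaker makes the
first move), which moreover ensures his victory within at most `T` of his turns: Maker
never completes an `A`–`B` crossing path, and after Breaker's first `T` turns every
`A`–`B` crossing path of the board contains a Breaker edge. -/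
def BreakerWinsShannonBFWithin (ends : E → V × V) (board : Set E) (A B : Set V)
    (p q T : ℕ) : Prop :=
  ∃ τ : Strat E, ∀ σ : Strat E, SecondLegal board p τ σ →
    FirstLegal board q τ σ ∧
    (∀ t, ¬ CrossWin ends A B (↑(secondClaimed (hist τ σ t)) : Set E)) ∧
    ¬ CrossWin ends A B (board \ ↑(firstClaimed (hist τ σ T)))

/-! ### Histories and legal moves -/

theorem allClaimed_eq_union (h : List (Finset E)) :
    allClaimed h = firstClaimed h ∪ secondClaimed h := by
  unfold firstClaimed secondClaimed
  induction h with
  | nil => rfl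
  | cons a h ih =>
    change a ∪ allClaimed h = a ∪ altUnion false h ∪ altUnion true h
    rw [ih, Finset.union_comm (altUnion true h), Finset.union_assoc]

omit [DecidableEq E] in
theorem length_hist (σ τ : Strat E) (t : ℕ) : (hist σ τ t).length = 2 * t := by
  induction t with
  | zero => rfl
  | succ t ih => simp [hist, ih, mul_add]

theorem altUnion_hist_append (σ τ : Strat E) (b : Bool) (t : ℕ) (g : List (Finset E)) :
    altUnion b (hist σ τ t ++ g) = altUnion b (hist σ τ t) ∪ altUnion b g := by
  induction t generalizing g with
  | zero => cases b <;> simp [hist, altUnion]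
  | succ t ih =>
    simp only [hist, List.append_assoc, List.cons_append, List.nil_append, ih]
    cases b <;> simp [altUnion, Finset.union_assoc]

theorem firstClaimed_hist_append_singleton (σ τ : Strat E) (t : ℕ) (mv : Finset E) :
    firstClaimed (hist σ τ t ++ [mv]) = firstClaimed (hist σ τ t) ∪ mv := by
  simp [firstClaimed, altUnion_hist_append, altUnion]

theorem secondClaimed_hist_append_singleton (σ τ : Strat E) (t : ℕ) (mv : Finset E) :
    secondClaimed (hist σ τ t ++ [mv]) = secondClaimed (hist σ τ t) := by
  simp [secondClaimed, altUnion_hist_append, altUnion]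

theorem firstClaimed_hist_succ (σ τ : Strat E) (t : ℕ) :
    firstClaimed (hist σ τ (t + 1)) = firstClaimed (hist σ τ t) ∪ σ (hist σ τ t) := by
  simp [hist, firstClaimed, altUnion_hist_append, altUnion]

theorem secondClaimed_hist_succ (σ τ : Strat E) (t : ℕ) :
    secondClaimed (hist σ τ (t + 1)) =
      secondClaimed (hist σ τ t) ∪ τ (hist σ τ t ++ [σ (hist σ τ t)]) := by
  simp [hist, secondClaimed, altUnion_hist_append, altUnion]

section LegalMoves

variable {board : Set E} {k k' : ℕ} {σ τ : Strat E}

theorem LegalMove.card_le {h : List (Finset E)} {mv : Finset E} (hmv : LegalMove board h k mv) :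
    mv.card ≤ k :=
  hmv.2.elim le_of_eq fun hlt => hlt.1.le

theorem LegalMove.disjoint_allClaimed {h : List (Finset E)} {mv : Finset E}
    (hmv : LegalMove board h k mv) : Disjoint (allClaimed h) mv :=
  Finset.disjoint_right.2 fun _ he => (hmv.1 he).2

theorem exists_legalMove_superset {h : List (Finset E)} {s : Finset E}
    (hs : ↑s ⊆ board \ ↑(allClaimed h)) (hk : s.card ≤ k) :
    ∃ mv, s ⊆ mv ∧ LegalMove board h k mv := by
  rcases le_or_gt (k : ℕ∞) (board \ ↑(allClaimed h)).encard with hfree | hfree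
  · obtain ⟨r, hsr, hr, hrk⟩ := Set.exists_superset_subset_encard_eq hs
      (by simpa using hk) hfree
    lift r to Finset E using Set.finite_of_encard_eq_coe hrk
    exact ⟨r, mod_cast hsr, hr, .inl (by simpa using hrk)⟩
  · obtain ⟨r, hr⟩ := (Set.finite_of_encard_le_coe hfree.le).exists_finset_coe
    rw [← hr] at hs hfree
    exact ⟨r, mod_cast hs, hr.le, .inr ⟨by simpa using hfree, hr.ge⟩⟩

theorem exists_legalMove (board : Set E) (h : List (Finset E)) (k : ℕ) :
    ∃ mv, LegalMove board h k mv := by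
  obtain ⟨mv, -, hmv⟩ := exists_legalMove_superset (board := board) (h := h) (k := k) (s := ∅)
    (by simp) (by simp)
  exact ⟨mv, hmv⟩

theorem coe_firstClaimed_hist_subset (hσ : FirstLegal board k σ τ) (t : ℕ) :
    ↑(firstClaimed (hist σ τ t)) ⊆ board := by
  induction t with
  | zero => simp [hist, firstClaimed, altUnion]
  | succ t ih =>
    rw [firstClaimed_hist_succ, Finset.coe_union]
    exact Set.union_subset ih ((hσ t).1.trans Set.sdiff_subset)

theorem disjoint_firstClaimed_secondClaimed_hist (hσ : FirstLegal board k σ τ)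
    (hτ : SecondLegal board k' σ τ) (t : ℕ) :
    Disjoint (firstClaimed (hist σ τ t)) (secondClaimed (hist σ τ t)) := by
  induction t with
  | zero => simp [hist, firstClaimed, altUnion]
  | succ t ih =>
    have hfirst := (hσ t).disjoint_allClaimed
    have hsecond := (hτ t).disjoint_allClaimed
    rw [allClaimed_eq_union, Finset.disjoint_union_left] at hfirst hsecond
    rw [firstClaimed_hist_append_singleton] at hsecond
    rw [firstClaimed_hist_succ, secondClaimed_hist_succ, Finset.disjoint_union_right]
    exact ⟨Finset.disjoint_union_left.2 ⟨ih, hfirst.2.symm⟩, hsecond.1⟩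

end LegalMoves

/-! ### Positions won by Breaker -/

/-- Breaker, about to move, can make sure within `n` of his turns that `board` minus his edges
fails `W`, where Maker aims at an edge set satisfying `W`, has claimed `M` so far, and Breaker has
claimed `K`. The rules are relaxed compared with `LegalMove`: players may claim fewer edges than
their bias, and Maker's sets are unrestricted (what she claims off the board or inside `K` is
worthless). This makes local games insensitive to moves made elsewhere. -/
def BreakerWinsIn (W : Set E → Prop) (board : Set E) (p q : ℕ) :
    ℕ → Finset E → Finset E → Prop
  | 0, _, K => ¬ W (board \ ↑K)
  | n + 1, M, K => ∃ N : Finset E, ↑N ⊆ board \ ↑M ∧ N.card ≤ q ∧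
      ∀ X : Finset E, X.card ≤ p → BreakerWinsIn W board p q n (M ∪ X) (K ∪ N)

section BreakerWinsIn

variable {W : Set E → Prop} {board : Set E} {p q n : ℕ} {M M' K K' : Finset E}

theorem BreakerWinsIn.mono (hW : Monotone W) (h : BreakerWinsIn W board p q n M K)
    (hM : ↑M' ∩ board ⊆ (↑M ∪ ↑K : Set E)) (hK : ↑K ∩ board ⊆ (↑K' : Set E)) :
    BreakerWinsIn W board p q n M' K' := by
  induction n generalizing M M' K K' with
  | zero => exact fun hW' => h (hW (fun e he => ⟨he.1, fun heK => he.2 (hK ⟨heK, he.1⟩)⟩) hW')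
  | succ n ih =>
    obtain ⟨N, hN, hNq, hwin⟩ := h
    refine ⟨N \ K, fun e he => ?_, (Finset.card_le_card Finset.sdiff_subset).trans hNq,
      fun X hX => ih (hwin X hX) (fun e he => ?_) (fun e he => ?_)⟩
    · have heN := @hN e
      have heM := @hM e
      simp only [Finset.coe_sdiff, Set.mem_sdiff, Set.mem_inter_iff, Set.mem_union,
        Finset.mem_coe] at *
      tauto
    · have heM := @hM e
      simp only [Finset.coe_union, Set.mem_inter_iff, Set.mem_union] at *
      tauto
    · have heK := @hK e
      simp only [Finset.coe_union, Finset.coe_sdiff, Set.mem_inter_iff, Set.mem_union,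
        Set.mem_sdiff] at *
      tauto

theorem BreakerWinsIn.not_of_disjoint (hW : Monotone W) (h : BreakerWinsIn W board p q n M K)
    (hM : ↑M ⊆ board) (hMK : Disjoint M K) : ¬ W ↑M := by
  induction n generalizing K with
  | zero => exact fun hWM => h (hW (Set.subset_sdiff.2 ⟨hM, mod_cast hMK⟩) hWM)
  | succ n ih =>
    obtain ⟨N, hN, -, hwin⟩ := h
    have hMN : Disjoint M N := Finset.disjoint_right.2 fun e he => (hN he).2
    exact ih (by simpa using hwin ∅ (by simp)) (Finset.disjoint_union_right.2 ⟨hMK, hMN⟩)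

theorem exists_legalMove_breakerWinsIn (hW : Monotone W) {g : List (Finset E)}
    (h : BreakerWinsIn W board p q n (firstClaimed g) (secondClaimed g)) :
    ∃ N, LegalMove board g q N ∧ ∀ X : Finset E, X.card ≤ p →
      BreakerWinsIn W board p q (n - 1) (firstClaimed g ∪ X) (secondClaimed g ∪ N) := by
  cases n with
  | zero =>
    obtain ⟨N, hN⟩ := exists_legalMove board g q
    exact ⟨N, hN, fun _ _ hWK =>
      h (hW (Set.sdiff_subset_sdiff_right (mod_cast Finset.subset_union_left)) hWK)⟩
  | succ n =>
    obtain ⟨N, hN, hNq, hwin⟩ := h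
    obtain ⟨N', hNN', hN'⟩ : ∃ N', N \ secondClaimed g ⊆ N' ∧ LegalMove board g q N' := by
      refine exists_legalMove_superset (fun e he => ?_)
        ((Finset.card_le_card Finset.sdiff_subset).trans hNq)
      have heN := @hN e
      rw [allClaimed_eq_union]
      simp only [Finset.coe_sdiff, Finset.coe_union, Set.mem_sdiff, Set.mem_union] at *
      tauto
    refine ⟨N', hN', fun X hX => (hwin X hX).mono hW
      (Set.inter_subset_left.trans Set.subset_union_left)
      (Set.inter_subset_left.trans (mod_cast ?_))⟩
    rw [← Finset.union_sdiff_self_eq_union]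
    exact Finset.union_subset_union_right hNN'

theorem exists_legalMove_best_maker_reply (hW : Monotone W) (n : ℕ) (g : List (Finset E)) :
    ∃ X, LegalMove board g p X ∧
      (BreakerWinsIn W board p q n (secondClaimed g ∪ X) (firstClaimed g) →
        ∀ Y : Finset E, Y.card ≤ p →
          BreakerWinsIn W board p q n (secondClaimed g ∪ Y) (firstClaimed g)) := by
  classical
  by_cases hall : ∀ Y : Finset E, Y.card ≤ p →
      BreakerWinsIn W board p q n (secondClaimed g ∪ Y) (firstClaimed g)
  · obtain ⟨X, hX⟩ := exists_legalMove board g p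
    exact ⟨X, hX, fun _ => hall⟩
  · push Not at hall
    obtain ⟨Y, hYp, hY⟩ := hall
    obtain ⟨X, hYX, hX⟩ := exists_legalMove_superset (board := board) (h := g) (k := p)
      (s := {e ∈ Y | e ∈ board} \ allClaimed g)
      (fun e => by
        simp only [Finset.coe_sdiff, Finset.coe_filter, Set.mem_sdiff, Set.mem_ofPred_eq,
          SetLike.mem_coe, and_imp]
        tauto)
      ((Finset.card_le_card (Finset.sdiff_subset.trans (Finset.filter_subset _ _))).trans hYp)
    refine ⟨X, hX, fun hwin => absurd (hwin.mono hW (fun e he => ?_) Set.inter_subset_left) hY⟩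
    have heX := @hYX e
    rw [allClaimed_eq_union] at heX
    simp only [Finset.coe_union, Set.mem_inter_iff, Set.mem_union, Finset.mem_coe,
      Finset.mem_sdiff, Finset.mem_filter, Finset.mem_union] at *
    tauto

end BreakerWinsIn

/-! ### Shannon games and positions -/

section Shannon

variable {ends : E → V × V} {board : Set E} {A B : Set V} {p q T : ℕ}

omit [DecidableEq E] in
theorem monotone_crossWin (ends : E → V × V) (A B : Set V) : Monotone (CrossWin ends A B) := by
  rintro F F' hF ⟨a, ha, b, hb, hab⟩
  exact ⟨a, ha, b, hb,
    Relation.ReflTransGen.mono (fun _ _ ⟨e, he, hends⟩ => ⟨e, hF he, hends⟩) _ _ hab⟩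

theorem breakerWinsShannon_of_breakerWinsIn
    (h : ∀ X : Finset E, X.card ≤ p → ∃ n, BreakerWinsIn (CrossWin ends A B) board p q n X ∅) :
    BreakerWinsShannon ends board A B p q := by
  have hmono := monotone_crossWin ends A B
  have hreply (g : List (Finset E)) : ∃ N, LegalMove board g q N ∧
      ((∃ n, BreakerWinsIn (CrossWin ends A B) board p q n (firstClaimed g) (secondClaimed g)) →
        ∀ X : Finset E, X.card ≤ p → ∃ n, BreakerWinsIn (CrossWin ends A B) board p q n
          (firstClaimed g ∪ X) (secondClaimed g ∪ N)) := by
    by_cases hg : ∃ n, BreakerWinsIn (CrossWin ends A B) board p q n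
      (firstClaimed g) (secondClaimed g)
    · obtain ⟨n, hn⟩ := hg
      obtain ⟨N, hN, hwin⟩ := exists_legalMove_breakerWinsIn hmono hn
      exact ⟨N, hN, fun _ X hX => ⟨n - 1, hwin X hX⟩⟩
    · obtain ⟨N, hN⟩ := exists_legalMove board g q
      exact ⟨N, hN, fun hwin => absurd hwin hg⟩
  choose τ hτ hwin using hreply
  refine ⟨τ, fun σ hσ => ⟨fun t => hτ _, fun t => ?_⟩⟩
  have hposition (t : ℕ) : ∀ X : Finset E, X.card ≤ p →
      ∃ n, BreakerWinsIn (CrossWin ends A B) board p q n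
        (firstClaimed (hist σ τ t) ∪ X) (secondClaimed (hist σ τ t)) := by
    induction t with
    | zero => simpa [hist, firstClaimed, secondClaimed, altUnion] using h
    | succ t ih =>
      have hnext := hwin (hist σ τ t ++ [σ (hist σ τ t)])
      rw [firstClaimed_hist_append_singleton, secondClaimed_hist_append_singleton] at hnext
      rw [firstClaimed_hist_succ, secondClaimed_hist_succ]
      exact hnext (ih _ (hσ t).card_le)
  obtain ⟨n, hn⟩ := hposition t ∅ (by simp)
  rw [Finset.union_empty] at hn
  exact hn.not_of_disjoint hmono (coe_firstClaimed_hist_subset hσ t)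
    (disjoint_firstClaimed_secondClaimed_hist hσ (fun t => hτ _) t)

theorem BreakerWinsShannonBFWithin.breakerWinsIn
    (h : BreakerWinsShannonBFWithin ends board A B p q T) :
    BreakerWinsIn (CrossWin ends A B) board p q T ∅ ∅ := by
  obtain ⟨τ, hτ⟩ := h
  by_contra hlose
  -- Only the length of the history tells Maker how many turns Breaker has left.
  choose σ hσ hbest using fun g : List (Finset E) =>
    exists_legalMove_best_maker_reply (board := board) (p := p) (q := q)
      (monotone_crossWin ends A B) (T - 1 - g.length / 2) g
  obtain ⟨hτlegal, -, hwin⟩ := hτ σ fun t => hσ _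
  have hposition (t : ℕ) (ht : t ≤ T) : ¬ BreakerWinsIn (CrossWin ends A B) board p q (T - t)
      (secondClaimed (hist τ σ t)) (firstClaimed (hist τ σ t)) := by
    induction t with
    | zero => simpa [hist, firstClaimed, secondClaimed, altUnion] using hlose
    | succ t ih =>
      set N := τ (hist τ σ t) with hN
      have hreply := hbest (hist τ σ t ++ [N])
      have hturns : T - 1 - (hist τ σ t ++ [N]).length / 2 = T - (t + 1) := by
        rw [List.length_append, length_hist, List.length_singleton]
        omega
      rw [hturns, firstClaimed_hist_append_singleton, secondClaimed_hist_append_singleton]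
        at hreply
      rw [firstClaimed_hist_succ, secondClaimed_hist_succ, ← hN]
      refine fun hnext => ih (by omega) ?_
      rw [show T - t = T - (t + 1) + 1 by omega]
      refine ⟨N, fun e he => ⟨((hτlegal t).1 he).1, fun heM => ((hτlegal t).1 he).2 ?_⟩,
        (hτlegal t).card_le, hreply hnext⟩
      rw [allClaimed_eq_union]
      exact mod_cast Finset.mem_union_right _ heM
  refine hposition T le_rfl ?_
  rw [Nat.sub_self]
  exact hwin

end Shannon

/-! ### The strip strategy -/

section Counting

variable {ι : Type*}

theorem card_le_card_filter_eq_zero_add_sum (s : Finset ι) (f : ι → ℕ) :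
    s.card ≤ {i ∈ s | f i = 0}.card + ∑ i ∈ s, f i := by
  rw [← Finset.card_filter_add_card_filter_not (s := s) (fun i => f i = 0),
    ← Finset.sum_filter_ne_zero]
  gcongr
  simpa using Finset.card_nsmul_le_sum {i ∈ s | f i ≠ 0} f 1
    fun i hi => Nat.one_le_iff_ne_zero.2 (Finset.mem_filter.1 hi).2

open Classical in
omit [DecidableEq E] in
theorem sum_card_filter_mem_le {strip : ι → Set E}
    (hdisj : Pairwise fun i j => Disjoint (strip i) (strip j)) (X : Finset E) (s : Finset ι) :
    ∑ i ∈ s, {e ∈ X | e ∈ strip i}.card ≤ X.card := by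
  rw [← Finset.card_biUnion]
  · exact Finset.card_le_card (Finset.biUnion_subset.2 fun i _ => Finset.filter_subset _ X)
  · intro i _ j _ hij
    refine Finset.disjoint_left.2 fun e hi hj => ?_
    exact Set.disjoint_left.1 (hdisj hij) (Finset.mem_filter.1 hi).2 (Finset.mem_filter.1 hj).2

end Counting

/-- Breaker wins within `n` turns whenever Maker adds fewer than `w` edges before he moves. For
`w = 0` nothing is asserted: the strip may be lost. -/
def HasSlack (W : Set E → Prop) (board : Set E) (p q n : ℕ) (M K : Finset E) (w : ℕ) : Prop :=
  ∀ X : Finset E, X.card < w → BreakerWinsIn W board p q n (M ∪ X) K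

/-- The situation during a stage of the strip strategy, which turns strips won within `n + 1` turns
into strips won within `n`: the strips in `U` have not been touched by Maker nor used by Breaker
since the stage began, and every strip `i` has slack `w i`. -/
structure StageInvariant {ι : Type*} (W : ι → Set E → Prop) (strip : ι → Set E) (p q n : ℕ)
    (U : Finset ι) (w : ι → ℕ) (M K : Finset E) : Prop where
  breakerWinsIn : ∀ i ∈ U, BreakerWinsIn (W i) (strip i) p q (n + 1) M K
  hasSlack : ∀ i, HasSlack (W i) (strip i) p q n M K (w i)
  slack_eq_zero : ∀ i ∈ U, w i = 0
  slack_le : ∀ i, w i ≤ p + 1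

section HasSlack

variable {W : Set E → Prop} {board : Set E} {p q n w : ℕ} {M K : Finset E}

theorem HasSlack.union_right (hW : Monotone W) (h : HasSlack W board p q n M K w)
    {K' : Finset E} (hK : K ⊆ K') : HasSlack W board p q n M K' w := fun X hX =>
  (h X hX).mono hW (Set.inter_subset_left.trans Set.subset_union_left)
    (Set.inter_subset_left.trans (mod_cast hK))

theorem HasSlack.maker_move (hW : Monotone W) (h : HasSlack W board p q n M K w)
    {X Y : Finset E} (hXY : ↑X ∩ board ⊆ (↑Y : Set E)) :
    HasSlack W board p q n (M ∪ X) K (w - Y.card) := by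
  intro Z hZ
  have hcard : (Y ∪ Z).card < w := by
    have := Finset.card_union_le Y Z
    omega
  refine (h (Y ∪ Z) hcard).mono hW (fun e he => ?_) Set.inter_subset_left
  have heY := @hXY e
  simp only [Finset.coe_union, Set.mem_inter_iff, Set.mem_union] at *
  tauto

end HasSlack

section Strips

variable {ι : Type*} {W : ι → Set E → Prop} {strip : ι → Set E} {p q n : ℕ} {U : Finset ι}
  {w : ι → ℕ} {M K : Finset E}

theorem StageInvariant.breaker_turn [DecidableEq ι] (hW : ∀ i, Monotone (W i))
    (h : StageInvariant W strip p q n U w M K) {L : Finset ι} (hL : L ⊆ U) :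
    ∃ N : Finset E, ↑N ⊆ (⋃ i, strip i) \ ↑M ∧ N.card ≤ L.card * q ∧
      StageInvariant W strip p q n (U \ L) (L.piecewise (fun _ => p + 1) w) M (K ∪ N) := by
  have hlocal (i : ι) : ∃ N : Finset E, i ∈ L → ↑N ⊆ strip i \ ↑M ∧ N.card ≤ q ∧
      HasSlack (W i) (strip i) p q n M (K ∪ N) (p + 1) := by
    by_cases hi : i ∈ L
    · obtain ⟨N, hN, hNq, hwin⟩ := h.breakerWinsIn i (hL hi)
      exact ⟨N, fun _ => ⟨hN, hNq, fun X hX => hwin X (Nat.le_of_lt_succ hX)⟩⟩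
    · exact ⟨∅, fun hi' => absurd hi' hi⟩
  choose N hN using hlocal
  refine ⟨L.biUnion N, fun e he => ?_, Finset.card_biUnion_le_card_mul _ _ _ fun i hi =>
    (hN i hi).2.1, ?_, fun i => ?_, fun i hi => ?_, fun i => ?_⟩
  · obtain ⟨i, hi, hei⟩ := Finset.mem_biUnion.1 (Finset.mem_coe.1 he)
    exact Set.sdiff_subset_sdiff_left (Set.subset_iUnion strip i) ((hN i hi).1 hei)
  · exact fun i hi => (h.breakerWinsIn i (Finset.mem_sdiff.1 hi).1).mono (hW i)
      (Set.inter_subset_left.trans Set.subset_union_left)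
      (Set.inter_subset_left.trans (mod_cast Finset.subset_union_left))
  · by_cases hi : i ∈ L
    · rw [Finset.piecewise_eq_of_mem _ _ _ hi]
      exact (hN i hi).2.2.union_right (hW i)
        (Finset.union_subset_union_right (Finset.subset_biUnion_of_mem N hi))
    · rw [Finset.piecewise_eq_of_notMem _ _ _ hi]
      exact (h.hasSlack i).union_right (hW i) Finset.subset_union_left
  · obtain ⟨hiU, hiL⟩ := Finset.mem_sdiff.1 hi
    rw [Finset.piecewise_eq_of_notMem _ _ _ hiL, h.slack_eq_zero i hiU]
  · exact Finset.piecewise_le_of_le_of_le (f := fun _ => p + 1) L le_rfl h.slack_le i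

open Classical in
theorem StageInvariant.maker_turn (hW : ∀ i, Monotone (W i))
    (h : StageInvariant W strip p q n U w M K) (X : Finset E) :
    StageInvariant W strip p q n {i ∈ U | {e ∈ X | e ∈ strip i}.card = 0}
      (fun i => w i - {e ∈ X | e ∈ strip i}.card) (M ∪ X) K where
  breakerWinsIn i hi := by
    obtain ⟨hiU, hiX⟩ := Finset.mem_filter.1 hi
    rw [Finset.card_eq_zero, Finset.filter_eq_empty_iff] at hiX
    refine (h.breakerWinsIn i hiU).mono (hW i) ?_ Set.inter_subset_left
    rintro e ⟨heMX, he⟩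
    exact .inl ((Finset.mem_union.1 heMX).resolve_right fun heX => hiX heX he)
  hasSlack i := (h.hasSlack i).maker_move (hW i) (by rintro e ⟨heX, he⟩; simpa using ⟨heX, he⟩)
  slack_eq_zero i hi := by rw [h.slack_eq_zero i (Finset.mem_filter.1 hi).1, Nat.zero_sub]
  slack_le i := (Nat.sub_le _ _).trans (h.slack_le i)

theorem StageInvariant.round [Fintype ι] (hW : ∀ i, Monotone (W i))
    (hdisj : Pairwise fun i j => Disjoint (strip i) (strip j))
    (h : StageInvariant W strip p q n U w M K) {l : ℕ} (hl : l ≤ U.card) :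
    ∃ N : Finset E, ↑N ⊆ (⋃ i, strip i) \ ↑M ∧ N.card ≤ l * q ∧ ∀ X : Finset E, ∃ U' w',
      StageInvariant W strip p q n U' w' (M ∪ X) (K ∪ N) ∧
      U.card ≤ U'.card + (l + X.card) ∧ ∑ i, w i + l * (p + 1) ≤ ∑ i, w' i + X.card := by
  classical
  obtain ⟨L, hLU, rfl⟩ := Finset.exists_subset_card_eq hl
  obtain ⟨N, hN, hNq, hinv⟩ := h.breaker_turn hW hLU
  refine ⟨N, hN, hNq, fun X => ⟨_, _, hinv.maker_turn hW X, ?_, ?_⟩⟩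
  · have huntouched := card_le_card_filter_eq_zero_add_sum (U \ L)
      fun i => {e ∈ X | e ∈ strip i}.card
    have hX := sum_card_filter_mem_le hdisj X (U \ L)
    have hU := Finset.card_sdiff_add_card_eq_card hLU
    omega
  · set w' := L.piecewise (fun _ => p + 1) w
    have hw' : ∑ i, w' i = ∑ i, w i + L.card * (p + 1) := by
      have hwL : ∑ i ∈ L, w i = 0 := Finset.sum_eq_zero fun i hi => h.slack_eq_zero i (hLU hi)
      have hsplit := Finset.sum_sdiff (f := w) (Finset.subset_univ L)
      rw [Finset.sum_piecewise, Finset.univ_inter, Finset.sum_const, smul_eq_mul]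
      omega
    calc ∑ i, w i + L.card * (p + 1)
        = ∑ i, w' i := hw'.symm
      _ ≤ ∑ i, (w' i - {e ∈ X | e ∈ strip i}.card) + ∑ i, {e ∈ X | e ∈ strip i}.card := by
        rw [← Finset.sum_add_distrib]
        exact Finset.sum_le_sum fun i _ => le_tsub_add
      _ ≤ ∑ i, (w' i - {e ∈ X | e ∈ strip i}.card) + X.card := by
        gcongr
        exact sum_card_filter_mem_le hdisj X Finset.univ

theorem StageInvariant.exists_survivors [Fintype ι] (h : StageInvariant W strip p q n U w M K)
    {k : ℕ} (hk : (p + 1) * k ≤ ∑ i, w i) :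
    ∃ U' : Finset ι, k ≤ U'.card ∧ ∀ i ∈ U', BreakerWinsIn (W i) (strip i) p q n M K := by
  refine ⟨({i | w i ≠ 0} : Finset ι), ?_, fun i hi => ?_⟩
  · refine Nat.le_of_mul_le_mul_left (hk.trans ?_) p.succ_pos
    rw [← Finset.sum_filter_ne_zero, mul_comm]
    exact Finset.sum_le_card_nsmul _ _ _ fun i _ => h.slack_le i
  · simpa using h.hasSlack i ∅ (Nat.pos_of_ne_zero (Finset.mem_filter.1 hi).2)

variable {Wglob : Set E → Prop} {board : Set E} {l P : ℕ}

theorem StageInvariant.breakerWinsIn_global [Fintype ι] (hW : ∀ i, Monotone (W i))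
    (hdisj : Pairwise fun i j => Disjoint (strip i) (strip j)) (hsub : ∀ i, strip i ⊆ board)
    (hP : P < l * (p + 1)) {k t : ℕ}
    (hnext : ∀ (M K : Finset E) (U : Finset ι), k ≤ U.card →
      (∀ i ∈ U, BreakerWinsIn (W i) (strip i) p q n M K) →
      BreakerWinsIn Wglob board P (l * q) t M K)
    (r : ℕ) (h : StageInvariant W strip p q n U w M K) (hU : (l + P) * r ≤ U.card)
    (hr : (p + 1) * k ≤ ∑ i, w i + r) :
    BreakerWinsIn Wglob board P (l * q) (t + r) M K := by
  induction r generalizing U w M K with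
  | zero =>
    obtain ⟨U', hkU', hwin⟩ := h.exists_survivors hr
    exact hnext M K U' hkU' hwin
  | succ r ih =>
    rw [mul_add, mul_one] at hU
    obtain ⟨N, hN, hNq, hround⟩ := h.round hW hdisj (show l ≤ U.card by omega)
    refine ⟨N, hN.trans (Set.sdiff_subset_sdiff_left (Set.iUnion_subset hsub)), hNq,
      fun X hX => ?_⟩
    obtain ⟨U', w', h', hU', hw'⟩ := hround X
    exact ih h' (by omega) (by omega)

theorem exists_breakerWinsIn_of_strips [Finite ι] (hW : ∀ i, Monotone (W i))
    (hdisj : Pairwise fun i j => Disjoint (strip i) (strip j)) (hsub : ∀ i, strip i ⊆ board)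
    (hP : P < l * (p + 1))
    (hglob : ∀ i, ∀ K : Finset E, ¬ W i (strip i \ ↑K) → ¬ Wglob (board \ ↑K)) (n : ℕ) :
    ∃ t, ∀ (M K : Finset E) (U : Finset ι), ((l + P) * (p + 1)) ^ n ≤ U.card →
      (∀ i ∈ U, BreakerWinsIn (W i) (strip i) p q n M K) →
      BreakerWinsIn Wglob board P (l * q) t M K := by
  have := Fintype.ofFinite ι
  induction n with
  | zero =>
    refine ⟨0, fun M K U hU hwin => ?_⟩
    obtain ⟨i, hi⟩ := Finset.card_pos.1 (by simpa using hU)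
    exact hglob i K (hwin i hi)
  | succ n ih =>
    obtain ⟨t, ht⟩ := ih
    set k := ((l + P) * (p + 1)) ^ n
    refine ⟨t + (p + 1) * k, fun M K U hU hwin => ?_⟩
    have hstart : StageInvariant W strip p q n U (fun _ => 0) M K :=
      ⟨hwin, fun _ _ hX => absurd hX (Nat.not_lt_zero _), fun _ _ => rfl, fun _ => Nat.zero_le _⟩
    refine hstart.breakerWinsIn_global hW hdisj hsub hP ht _ ?_ (by simp)
    rwa [← mul_assoc, ← pow_succ']

end Strips

theorem breaker_wins_general_strip_theorem_general {ι : Type*} [Fintype ι]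
    (ends : E → V × V) (board : Set E) (A B : Set V) (p q l T P : ℕ) (hP : P < l * (p + 1))
    (Eloc : ι → Set E) (Aloc Bloc : ι → Set V)
    (hdisj : Pairwise fun i j => Disjoint (Eloc i) (Eloc j)) (hsub : ∀ i, Eloc i ⊆ board)
    (hlocal : ∀ i, ∀ E' ⊆ Eloc i, ¬ CrossWin ends (Aloc i) (Bloc i) (Eloc i \ E') →
      ¬ CrossWin ends A B (board \ E'))
    (hBF : ∀ i, BreakerWinsShannonBFWithin ends (Eloc i) (Aloc i) (Bloc i) p q T)
    (hcard : ((l + P) * (p + 1)) ^ T + P ≤ Fintype.card ι) :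
    BreakerWinsShannon ends board A B P (l * q) := by
  classical
  have hmono (i : ι) := monotone_crossWin ends (Aloc i) (Bloc i)
  have hglob (i : ι) (K : Finset E) (hK : ¬ CrossWin ends (Aloc i) (Bloc i) (Eloc i \ ↑K)) :
      ¬ CrossWin ends A B (board \ ↑K) := fun hcross =>
    hlocal i (Eloc i ∩ ↑K) Set.inter_subset_left (by rwa [Set.sdiff_self_inter])
      (monotone_crossWin ends A B (Set.sdiff_subset_sdiff_right Set.inter_subset_right) hcross)
  obtain ⟨t, ht⟩ := exists_breakerWinsIn_of_strips hmono hdisj hsub hP hglob T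
  refine breakerWinsShannon_of_breakerWinsIn fun X hX => ⟨t, ht X ∅
    {i | {e ∈ X | e ∈ Eloc i}.card = 0} ?_ fun i hi => (hBF i).breakerWinsIn.mono (hmono i) ?_ ?_⟩
  · have huntouched := card_le_card_filter_eq_zero_add_sum Finset.univ
      fun i => {e ∈ X | e ∈ Eloc i}.card
    have hsum := sum_card_filter_mem_le hdisj X Finset.univ
    rw [Finset.card_univ] at huntouched
    omega
  · rintro e ⟨heX, he⟩
    simp only [Finset.card_eq_zero, Finset.filter_eq_empty_iff, Finset.mem_filter] at hi
    exact absurd he (hi.2 heX)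
  · simp

theorem strip_bound_le {p q l : ℕ} (hq : 1 ≤ q) (hl : 1 ≤ l) (T : ℕ) :
    ((l + (l * (p + 1) - 1)) * (p + 1)) ^ T + (l * (p + 1) - 1) ≤
      ((l * (p + q + 1) - 1) * (p + 1)) ^ T + l * (p + 1) - 1 := by
  have hlp : 1 ≤ l * (p + 1) := Nat.mul_pos hl p.succ_pos
  have hlq : l * (p + 1) + l ≤ l * (p + q + 1) := by
    rw [← mul_add_one]
    exact Nat.mul_le_mul_left l (by omega)
  rw [Nat.add_sub_assoc hlp]
  gcongr
  omega

/-- **Theorem (general strip theorem).** Let `(G, A, B)` be a Shannon game-triple whose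
edge set is partitioned into `m` pairwise edge-disjoint strips `S i`, and suppose that on
each strip there is a local game-triple `(Gᵢ, Aᵢ, Bᵢ)` (with `E(Gᵢ) ⊆ Sᵢ`) such that
(ii) any set of Breaker edges defeating Maker locally defeats her globally, and
(iii) Breaker has a winning strategy for the `(p,q)`-Shannon switching game on
`(Gᵢ, Aᵢ, Bᵢ)` under the Breaker-First rule ensuring victory within at most `T` turns.
Set `s = l(p+q+1) − 1`. If `m ≥ (s(p+1))^T + l(p+1) − 1`, then Breaker has a winning
strategy for the `(l(p+1)−1, lq)`-Shannon switching game on `(G, A, B)`. -/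
theorem breaker_wins_general_strip_theorem
    {V E : Type} [Fintype V] [Fintype E] [DecidableEq E]
    (ends : E → V × V) (A B : Set V)
    (p q l T m : ℕ) (hp : 1 ≤ p) (hq : 1 ≤ q) (hl : 1 ≤ l)
    (S : Fin m → Set E)
    (hdisj : ∀ i j, i ≠ j → Disjoint (S i) (S j))
    (hcover : (⋃ i, S i) = (Set.univ : Set E))
    (Eloc : Fin m → Set E) (Aloc Bloc : Fin m → Set V)
    (hEloc : ∀ i, Eloc i ⊆ S i)
    (hlocal : ∀ i, ∀ E' ⊆ Eloc i,
      ¬ CrossWin ends (Aloc i) (Bloc i) (Eloc i \ E') →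
      ¬ CrossWin ends A B ((Set.univ : Set E) \ E'))
    (hBF : ∀ i, BreakerWinsShannonBFWithin ends (Eloc i) (Aloc i) (Bloc i) p q T)
    (hm : ((l * (p + q + 1) - 1) * (p + 1)) ^ T + l * (p + 1) - 1 ≤ m) :
    BreakerWinsShannon ends (Set.univ : Set E) A B (l * (p + 1) - 1) (l * q) := by
  exact breaker_wins_general_strip_theorem_general ends Set.univ A B p q l T (l * (p + 1) - 1)
    (Nat.sub_one_lt_of_lt (Nat.mul_pos hl p.succ_pos)) Eloc Aloc Bloc
    (fun i j hij => (hdisj i j hij).mono (hEloc i) (hEloc j)) (fun i => Set.subset_univ _)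
    hlocal hBF (by simpa using (strip_bound_le hq hl T).trans hm)

end ShannonStrips
end

section
/- Let (G,A,B) and (G',A',B') be Shannon game-triples such that (G',A',B') can be obtained from (G,A,B) by a finite sequence of vertex-deletions, edge-deletions and vertex-separations (where a deleted vertex is removed from the distinguished sets, and under vertex-separation of a vertex v into v₁ and v₂, the vertex v is replaced by both v₁ and v₂ in each distinguished set containing it). Then for all p, q ∈ ℕ: (i) if Maker has a winning strategy for the (p,q)-Shannon switching game on (G',A',B'), then Maker has a winning strategy for the (p,q)-Shannon switching game on (G,A,B); (ii) if Breaker has a winning strategy for the (p,q)-Shannon switching game on (G,A,B), then Breaker has a winning strategy for the (p,q)-Shannon switching game on (G',A',B'). -/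
namespace ShannonMonotone

/-- A Shannon game-triple: a finite multigraph (with possible loops), given by a finite
vertex set `V ⊆ ℕ`, a finite edge set `E ⊆ ℕ` and an edge-endpoint map `ends`, together
with two distinguished sets of vertices `A` and `B`. -/
structure Triple : Type where
  V : Finset ℕ
  E : Finset ℕ
  ends : ℕ → ℕ × ℕ
  A : Finset ℕ
  B : Finset ℕ

/-- Well-formedness of a game-triple: the endpoints of every edge are vertices, and the
distinguished sets consist of vertices. -/
def WF (t : Triple) : Prop :=
  (∀ e ∈ t.E, (t.ends e).1 ∈ t.V ∧ (t.ends e).2 ∈ t.V) ∧ t.A ⊆ t.V ∧ t.B ⊆ t.V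

/-- The edge `e` is incident to the vertex `v` in the triple `t`. -/
def incid (t : Triple) (v e : ℕ) : Prop := (t.ends e).1 = v ∨ (t.ends e).2 = v

/-- The number `m_G(u,w)` of edges of `t` joining the (distinct) vertices `u` and `w`. -/
def multTo (t : Triple) (u w : ℕ) : ℕ :=
  (t.E.filter (fun e => t.ends e = (u, w) ∨ t.ends e = (w, u))).card

/-- The number `m_G(v)` of loops of `t` at the vertex `v`. -/
def loopsAt (t : Triple) (v : ℕ) : ℕ :=
  (t.E.filter (fun e => t.ends e = (v, v))).card

/-- `t'` is obtained from `t` by deleting a vertex `v` (together with all edges incident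
to it; `v` is removed from the distinguished sets). -/
def DelVtx (t t' : Triple) : Prop :=
  ∃ v ∈ t.V, t'.V = t.V.erase v ∧ t'.ends = t.ends ∧
    (∀ e, e ∈ t'.E ↔ e ∈ t.E ∧ ¬ incid t v e) ∧
    t'.A = t.A.erase v ∧ t'.B = t.B.erase v

/-- `t'` is obtained from `t` by deleting an edge `e`. -/
def DelEdge (t t' : Triple) : Prop :=
  ∃ e ∈ t.E, t'.V = t.V ∧ t'.ends = t.ends ∧ t'.E = t.E.erase e ∧
    t'.A = t.A ∧ t'.B = t.B

/-- `t'` is obtained from `t` by a vertex-separation: a vertex `v` is deleted and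
replaced by two (new, distinct, adjacent) vertices `v₁` and `v₂`; edges not incident to
`v` are kept unchanged, all other edges of `t'` are incident to `v₁` or `v₂`, and they
satisfy the counting relations
`m_{G'}(v₁,v₂) + m_{G'}(v₁) + m_{G'}(v₂) = m_G(v) + 1` and
`m_{G'}(u,v₁) + m_{G'}(u,v₂) = m_G(u,v)` for every vertex `u ≠ v`. A vertex `v` in a
distinguished set is replaced there by both `v₁` and `v₂`. -/
def SepVtx (t t' : Triple) : Prop :=
  ∃ v v₁ v₂ : ℕ, v ∈ t.V ∧ v₁ ≠ v₂ ∧ v₁ ∉ t.V.erase v ∧ v₂ ∉ t.V.erase v ∧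
    t'.V = insert v₁ (insert v₂ (t.V.erase v)) ∧
    (∀ e ∈ t.E, ¬ incid t v e → e ∈ t'.E ∧ t'.ends e = t.ends e) ∧
    (∀ e ∈ t'.E, ¬ incid t' v₁ e ∧ ¬ incid t' v₂ e →
      e ∈ t.E ∧ t'.ends e = t.ends e ∧ ¬ incid t v e) ∧
    (∀ e ∈ t'.E, (t'.ends e).1 ∈ t'.V ∧ (t'.ends e).2 ∈ t'.V) ∧
    1 ≤ multTo t' v₁ v₂ ∧
    multTo t' v₁ v₂ + loopsAt t' v₁ + loopsAt t' v₂ = loopsAt t v + 1 ∧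
    (∀ u ∈ t.V.erase v, multTo t' u v₁ + multTo t' u v₂ = multTo t u v) ∧
    t'.A = (if v ∈ t.A then insert v₁ (insert v₂ (t.A.erase v)) else t.A) ∧
    t'.B = (if v ∈ t.B then insert v₁ (insert v₂ (t.B.erase v)) else t.B)

/-- `t'` is obtained from `t` by a single vertex-deletion, edge-deletion or
vertex-separation. -/
def Step (t t' : Triple) : Prop := DelVtx t t' ∨ DelEdge t t' ∨ SepVtx t t'

/-- `u` is joined to `v` by a walk using only edges from `F` in the triple `t`. -/
def Reach (t : Triple) (F : Set ℕ) (u v : ℕ) : Prop :=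
  Relation.ReflTransGen
    (fun a b => ∃ e ∈ F, e ∈ t.E ∧
      (((t.ends e).1 = a ∧ (t.ends e).2 = b) ∨ ((t.ends e).1 = b ∧ (t.ends e).2 = a))) u v

/-- The edge set `F` contains all the edges of an `A`–`B` crossing path of `t`. -/
def CrossWin (t : Triple) (F : Set ℕ) : Prop :=
  ∃ a ∈ t.A, ∃ b ∈ t.B, Reach t F a b

/-- A strategy: given the list of all moves played so far (oldest first), produce the
next move (a finite set of edges to claim). -/
abbrev Strat : Type := List (Finset ℕ) → Finset ℕ

/-- The union of the moves sitting in positions of the given parity of a history. -/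
def altUnion : Bool → List (Finset ℕ) → Finset ℕ
  | _, [] => ∅
  | true, mv :: h => mv ∪ altUnion false h
  | false, _ :: h => altUnion true h

/-- All edges claimed by Maker (the player moving first) in a history. -/
def makerClaimed (h : List (Finset ℕ)) : Finset ℕ := altUnion true h

/-- All edges claimed so far in a history. -/
def allClaimed (h : List (Finset ℕ)) : Finset ℕ := h.foldr (· ∪ ·) ∅

/-- The history of moves (oldest first) after `t` full rounds, when Maker (moving first)
uses strategy `σ` and Breaker uses strategy `τ`. -/
def hist (σ τ : Strat) : ℕ → List (Finset ℕ)
  | 0 => []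
  | t + 1 =>
    let h := hist σ τ t
    h ++ [σ h, τ (h ++ [σ h])]

/-- The move `mv` is legal on `board` after the history `h` for a player of bias `k`: it
consists of as-yet-unclaimed edges of the board, exactly `k` of them unless fewer than
`k` unclaimed edges remain, in which case the player claims all of them. -/
def LegalMove (board : Set ℕ) (h : List (Finset ℕ)) (k : ℕ) (mv : Finset ℕ) : Prop :=
  (↑mv : Set ℕ) ⊆ board \ ↑(allClaimed h) ∧
    (mv.card = k ∨ (mv.card < k ∧ board \ ↑(allClaimed h) ⊆ (↑mv : Set ℕ)))

/-- Maker (with bias `p`) always moves legally when playing `σ` against `τ`. -/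
def MakerLegal (board : Set ℕ) (p : ℕ) (σ τ : Strat) : Prop :=
  ∀ t, LegalMove board (hist σ τ t) p (σ (hist σ τ t))

/-- Breaker (with bias `q`) always moves legally when playing `τ` against `σ`. -/
def BreakerLegal (board : Set ℕ) (q : ℕ) (σ τ : Strat) : Prop :=
  ∀ t, LegalMove board (hist σ τ t ++ [σ (hist σ τ t)]) q
    (τ (hist σ τ t ++ [σ (hist σ τ t)]))

/-- Maker has a winning strategy for the `(p,q)`-Shannon switching game on the
game-triple `t`: moving first and claiming `p` edges per turn against Breaker's `q`, she
can guarantee to claim all the edges of an `A`–`B` crossing path. -/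
def MakerWins (t : Triple) (p q : ℕ) : Prop :=
  ∃ σ : Strat, ∀ τ : Strat, BreakerLegal (↑t.E) q σ τ →
    MakerLegal (↑t.E) p σ τ ∧ ∃ k, CrossWin t (↑(makerClaimed (hist σ τ k)) : Set ℕ)

/-- Breaker has a winning strategy for the `(p,q)`-Shannon switching game on the
game-triple `t`: claiming `q` edges per turn against Maker's `p`, he can forever prevent
Maker's claimed edges from containing an `A`–`B` crossing path. -/
def BreakerWins (t : Triple) (p q : ℕ) : Prop :=
  ∃ τ : Strat, ∀ σ : Strat, MakerLegal (↑t.E) p σ τ →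
    BreakerLegal (↑t.E) q σ τ ∧ ∀ k, ¬ CrossWin t (↑(makerClaimed (hist σ τ k)) : Set ℕ)

/-!
Maker can play on `G` by simulating a game on `G'`. Contracting one of the `v₁v₂` edges undoes a
vertex-separation: the counting relations say exactly that the remaining edges of `G'` inject into
the edges of `G` compatibly with the map merging `v₁` and `v₂`, and a deletion is undone by an
inclusion. Maker translates each simulated claim along this partial injection, and each claim of
Breaker back along it. The translated claims may fall short of her bias, but extra edges never hurt
the player who claims them. Since the board is finite the game is determined, so the implication for
Maker also gives the one for Breaker.
-/

/-! ### Positions won by Maker -/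

section Positions

variable {α β : Type*} {p q k : ℕ}

/-- The legal moves of a player of bias `k` when `R` is the set of unclaimed board elements: `k`
elements of `R`, or all of `R` if it has fewer than `k`. -/
def legalClaims (k : ℕ) (R : Finset α) : Finset (Finset α) :=
  R.powersetCard (min k R.card)

theorem mem_legalClaims {R X : Finset α} :
    X ∈ legalClaims k R ↔ X ⊆ R ∧ X.card = min k R.card :=
  Finset.mem_powersetCard

theorem exists_mem_legalClaims_superset {R Z : Finset α} (hZ : Z ⊆ R) (hk : Z.card ≤ k) :
    ∃ X ∈ legalClaims k R, Z ⊆ X := by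
  obtain ⟨X, hZX, hX⟩ := Finset.exists_subsuperset_card_eq hZ
    (le_min hk (Finset.card_le_card hZ)) (min_le_right k R.card)
  exact ⟨X, mem_legalClaims.2 hX, hZX⟩

theorem legalClaims_nonempty (k : ℕ) (R : Finset α) : (legalClaims k R).Nonempty :=
  Finset.powersetCard_nonempty.2 (min_le_right k R.card)

variable [DecidableEq α] [DecidableEq β]

/-- `MakerForces p q W M R` says that Maker, to move and owning `M` while `R` is unclaimed, can
force her set of claims to satisfy `W` at the end of some round. -/
inductive MakerForces (p q : ℕ) (W : Finset α → Prop) : Finset α → Finset α → Prop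
  | win {M R : Finset α} (hM : W M) : MakerForces p q W M R
  | move {M R X : Finset α} (hX : X ∈ legalClaims p R)
      (hreply : ∀ Y ∈ legalClaims q (R \ X), MakerForces p q W (M ∪ X) ((R \ X) \ Y)) :
      MakerForces p q W M R

theorem MakerForces.of_empty {W : Finset α → Prop} {M : Finset α}
    (h : MakerForces p q W M ∅) : W M := by
  generalize hR : (∅ : Finset α) = R at h
  induction h with
  | win hM => exact hM
  | move hX _ ih =>
    subst hR
    obtain rfl := Finset.subset_empty.1 (mem_legalClaims.1 hX).1
    simpa using ih ∅ (by simp [mem_legalClaims]) (by simp)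

theorem MakerForces.exists_good_claim (W : Finset α → Prop) (M R : Finset α) :
    ∃ X ∈ legalClaims p R, MakerForces p q W M R →
      W M ∨ ∀ Y ∈ legalClaims q (R \ X), MakerForces p q W (M ∪ X) ((R \ X) \ Y) := by
  obtain ⟨X₀, hX₀⟩ := legalClaims_nonempty p R
  by_cases h : MakerForces p q W M R
  · cases h with
    | win hM => exact ⟨X₀, hX₀, fun _ ↦ .inl hM⟩
    | move hX hreply => exact ⟨_, hX, fun _ ↦ .inr hreply⟩
  · exact ⟨X₀, hX₀, fun h' ↦ absurd h' h⟩

theorem MakerForces.exists_best_reply (W : Finset α → Prop) (M R : Finset α) :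
    ∃ Y ∈ legalClaims q R, MakerForces p q W M (R \ Y) →
      ∀ Y' ∈ legalClaims q R, MakerForces p q W M (R \ Y') := by
  by_cases h : ∀ Y ∈ legalClaims q R, MakerForces p q W M (R \ Y)
  · obtain ⟨Y, hY⟩ := legalClaims_nonempty q R
    exact ⟨Y, hY, fun _ ↦ h⟩
  · push Not at h
    obtain ⟨Y, hY, hlose⟩ := h
    exact ⟨Y, hY, fun h' ↦ absurd h' hlose⟩

theorem MakerForces.map {φ : α → β} {D : Finset α} {W' : Finset α → Prop} {W : Finset β → Prop}
    (hφ : Set.InjOn φ D)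
    (hW : ∀ M' M, (∀ e ∈ D, e ∈ M' → φ e ∈ M) → W' M' → W M)
    {M' R' : Finset α} (h : MakerForces p q W' M' R') {M R : Finset β}
    (hM : ∀ e ∈ D, e ∈ M' → φ e ∈ M) (hR : ∀ e ∈ D, e ∈ R' → φ e ∈ M ∪ R) :
    MakerForces p q W M R := by
  induction h generalizing M R with
  | win hM' => exact .win (hW _ _ hM hM')
  | @move M' R' X' hX' _ ih =>
    rw [mem_legalClaims] at hX'
    obtain ⟨X, hX, hX'X⟩ := exists_mem_legalClaims_superset (k := p)
      (R := R) (Z := (X' ∩ D).image φ ∩ R) Finset.inter_subset_right <| by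
        calc ((X' ∩ D).image φ ∩ R).card ≤ ((X' ∩ D).image φ).card :=
              Finset.card_le_card Finset.inter_subset_left
          _ ≤ (X' ∩ D).card := Finset.card_image_le
          _ ≤ X'.card := Finset.card_le_card Finset.inter_subset_left
          _ ≤ p := hX'.2.trans_le (min_le_left _ _)
    refine .move hX fun Y hY ↦ ?_
    obtain ⟨Y', hY', hYY'⟩ := exists_mem_legalClaims_superset (k := q)
      (R := R' \ X') (Z := {e ∈ R' \ X' | e ∈ D ∧ φ e ∈ Y}) (Finset.filter_subset _ _) <| by
        calc ({e ∈ R' \ X' | e ∈ D ∧ φ e ∈ Y} : Finset α).card ≤ Y.card :=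
              Finset.card_le_card_of_injOn φ (fun e he ↦ (Finset.mem_filter.1 he).2.2)
                (hφ.mono fun e he ↦ (Finset.mem_filter.1 he).2.1)
          _ ≤ q := (mem_legalClaims.1 hY).2.trans_le (min_le_left _ _)
    have hclaimed : ∀ e ∈ D, e ∈ X' → φ e ∈ M ∪ X := fun e heD heX ↦ by
      rcases Finset.mem_union.1 (hR e heD (hX'.1 heX)) with heM | heR
      · exact Finset.mem_union_left _ heM
      · exact Finset.mem_union_right _ <| hX'X <| Finset.mem_inter.2
          ⟨Finset.mem_image_of_mem φ (Finset.mem_inter.2 ⟨heX, heD⟩), heR⟩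
    refine ih Y' hY' (fun e heD he ↦ ?_) (fun e heD he ↦ ?_)
    · exact (Finset.mem_union.1 he).elim (fun heM ↦ Finset.mem_union_left _ (hM e heD heM))
        (hclaimed e heD)
    · obtain ⟨heRX, heY'⟩ := Finset.mem_sdiff.1 he
      have heY : φ e ∉ Y := fun heY ↦ heY' (hYY' (Finset.mem_filter.2 ⟨heRX, heD, heY⟩))
      have heMR := hR e heD (Finset.mem_sdiff.1 heRX).1
      simp only [Finset.mem_union, Finset.mem_sdiff] at heMR ⊢
      tauto

end Positions

/-! ### From positions to strategies -/

section Strategies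

variable {p q k : ℕ} {E : Finset ℕ} {W : Finset ℕ → Prop} {σ τ : Strat}

/-- The elements of the board `E` that nobody has claimed in the history `h`. -/
def unclaimed (E : Finset ℕ) (h : List (Finset ℕ)) : Finset ℕ := E \ allClaimed h

theorem legalMove_iff_mem_legalClaims {h : List (Finset ℕ)} {X : Finset ℕ} :
    LegalMove ↑E h k X ↔ X ∈ legalClaims k (unclaimed E h) := by
  rw [LegalMove, mem_legalClaims, ← Finset.coe_sdiff, Finset.coe_subset, Finset.coe_subset,
    ← unclaimed]
  refine and_congr_right fun hX ↦ ?_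
  have hle := Finset.card_le_card hX
  constructor
  · rintro (hcard | ⟨hlt, hsub⟩)
    · omega
    · have := Finset.card_le_card hsub
      omega
  · intro hcard
    by_cases hk : X.card = k
    · exact .inl hk
    · exact .inr ⟨by omega, (Finset.eq_of_subset_of_card_le hX (by omega)).ge⟩

theorem unclaimed_concat (E : Finset ℕ) (h : List (Finset ℕ)) (X : Finset ℕ) :
    unclaimed E (h ++ [X]) = unclaimed E h \ X := by
  have hall : allClaimed (h ++ [X]) = allClaimed h ∪ X := by
    induction h with
    | nil => simp [allClaimed]
    | cons Y h ih => simp_all [allClaimed]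
  rw [unclaimed, unclaimed, hall, sdiff_sdiff_left, Finset.sup_eq_union]

theorem altUnion_append (b : Bool) (h l : List (Finset ℕ)) :
    altUnion b (h ++ l) =
      altUnion b h ∪ altUnion (if Even h.length then b else !b) l := by
  induction h generalizing b with
  | nil => simp [altUnion]
  | cons X h ih =>
    cases b <;> by_cases hh : Even h.length <;> simp [altUnion, ih, Nat.even_add_one, hh]

theorem hist_succ (σ τ : Strat) (n : ℕ) :
    hist σ τ (n + 1) =
      hist σ τ n ++ [σ (hist σ τ n)] ++ [τ (hist σ τ n ++ [σ (hist σ τ n)])] := by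
  simp [hist]

theorem even_length_hist (σ τ : Strat) (n : ℕ) : Even (hist σ τ n).length := by
  induction n with
  | zero => simp [hist]
  | succ n ih => simp [hist, ih, Nat.even_add]

theorem makerClaimed_hist_concat (σ τ : Strat) (n : ℕ) (X : Finset ℕ) :
    makerClaimed (hist σ τ n ++ [X]) = makerClaimed (hist σ τ n) ∪ X := by
  simp [makerClaimed, altUnion_append, even_length_hist, altUnion]

theorem makerClaimed_hist_succ (σ τ : Strat) (n : ℕ) :
    makerClaimed (hist σ τ (n + 1)) = makerClaimed (hist σ τ n) ∪ σ (hist σ τ n) := by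
  simp [makerClaimed, hist, altUnion_append, even_length_hist, altUnion]

theorem unclaimed_hist_succ (E : Finset ℕ) (σ τ : Strat) (n : ℕ) :
    unclaimed E (hist σ τ (n + 1)) = (unclaimed E (hist σ τ n) \ σ (hist σ τ n)) \
      τ (hist σ τ n ++ [σ (hist σ τ n)]) := by
  rw [hist_succ, unclaimed_concat, unclaimed_concat]

theorem unclaimed_hist_card_eq_empty (hp : 1 ≤ p) (hσ : MakerLegal ↑E p σ τ) :
    unclaimed E (hist σ τ E.card) = ∅ := by
  have hcard : ∀ n, (unclaimed E (hist σ τ n)).card ≤ E.card - n := by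
    intro n
    induction n with
    | zero => simp [unclaimed, hist, allClaimed]
    | succ n ih =>
      obtain ⟨hsub, hX⟩ := mem_legalClaims.1 (legalMove_iff_mem_legalClaims.1 (hσ n))
      rw [unclaimed_hist_succ]
      calc ((unclaimed E (hist σ τ n) \ σ (hist σ τ n)) \ _).card
          ≤ (unclaimed E (hist σ τ n) \ σ (hist σ τ n)).card :=
            Finset.card_le_card Finset.sdiff_subset
        _ = (unclaimed E (hist σ τ n)).card - (σ (hist σ τ n)).card :=
            Finset.card_sdiff_of_subset hsub
        _ ≤ E.card - (n + 1) := by omega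
  simpa using hcard E.card

theorem exists_maker_strategy_of_makerForces (hp : 1 ≤ p) (h : MakerForces p q W ∅ E) :
    ∃ σ : Strat, (∀ h, LegalMove ↑E h p (σ h)) ∧
      ∀ τ, BreakerLegal ↑E q σ τ → ∃ n, W (makerClaimed (hist σ τ n)) := by
  choose claim hlegal hgood using MakerForces.exists_good_claim (p := p) (q := q) W
  let σ : Strat := fun h ↦ claim (makerClaimed h) (unclaimed E h)
  have hσ : ∀ h, LegalMove ↑E h p (σ h) := fun h ↦ legalMove_iff_mem_legalClaims.2 (hlegal _ _)
  refine ⟨σ, hσ, fun τ hτ ↦ ?_⟩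
  by_contra! hnever
  have hforces : ∀ n,
      MakerForces p q W (makerClaimed (hist σ τ n)) (unclaimed E (hist σ τ n)) := by
    intro n
    induction n with
    | zero => simpa [hist, makerClaimed, altUnion, unclaimed, allClaimed] using h
    | succ n ih =>
      have hY := legalMove_iff_mem_legalClaims.1 (hτ n)
      rw [unclaimed_concat] at hY
      rw [makerClaimed_hist_succ, unclaimed_hist_succ]
      exact (hgood _ _ ih).resolve_left (hnever n) _ hY
  have hend := hforces E.card
  rw [unclaimed_hist_card_eq_empty hp fun n ↦ hσ _] at hend
  exact hnever _ hend.of_empty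

theorem exists_breaker_strategy_of_not_makerForces (h : ¬ MakerForces p q W ∅ E) :
    ∃ τ : Strat, (∀ h, LegalMove ↑E h q (τ h)) ∧
      ∀ σ, MakerLegal ↑E p σ τ → ∀ n, ¬ W (makerClaimed (hist σ τ n)) := by
  choose reply hlegal hbest using MakerForces.exists_best_reply (p := p) (q := q) W
  let τ : Strat := fun h ↦ reply (makerClaimed h) (unclaimed E h)
  refine ⟨τ, fun h ↦ legalMove_iff_mem_legalClaims.2 (hlegal _ _), fun σ hσ n hwin ↦ ?_⟩
  suffices hn : ¬ MakerForces p q W (makerClaimed (hist σ τ n)) (unclaimed E (hist σ τ n)) from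
    hn (.win hwin)
  clear hwin
  induction n with
  | zero => simpa [hist, makerClaimed, altUnion, unclaimed, allClaimed] using h
  | succ n ih =>
    rw [makerClaimed_hist_succ, hist_succ, unclaimed_concat, ← makerClaimed_hist_concat σ τ]
    intro hforces
    have hall := hbest _ _ hforces
    rw [makerClaimed_hist_concat, unclaimed_concat] at hall
    exact ih (.move (legalMove_iff_mem_legalClaims.1 (hσ n)) hall)

theorem makerWins_iff_makerForces {t : Triple} (hp : 1 ≤ p) :
    MakerWins t p q ↔ MakerForces p q (fun M ↦ CrossWin t ↑M) ∅ t.E := by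
  constructor
  · rintro ⟨σ, hσ⟩
    by_contra hforces
    obtain ⟨τ, hlegal, hτ⟩ := exists_breaker_strategy_of_not_makerForces hforces
    obtain ⟨hσlegal, n, hwin⟩ := hσ τ fun n ↦ hlegal _
    exact hτ σ hσlegal n hwin
  · intro hforces
    obtain ⟨σ, hlegal, hσ⟩ := exists_maker_strategy_of_makerForces hp hforces
    exact ⟨σ, fun τ hτ ↦ ⟨fun n ↦ hlegal _, hσ τ hτ⟩⟩

theorem breakerWins_iff_not_makerForces {t : Triple} (hp : 1 ≤ p) :
    BreakerWins t p q ↔ ¬ MakerForces p q (fun M ↦ CrossWin t ↑M) ∅ t.E := by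
  constructor
  · rintro ⟨τ, hτ⟩ hforces
    obtain ⟨σ, hlegal, hσ⟩ := exists_maker_strategy_of_makerForces hp hforces
    obtain ⟨hτlegal, hnever⟩ := hτ σ fun n ↦ hlegal _
    obtain ⟨n, hwin⟩ := hσ τ hτlegal
    exact hnever n hwin
  · intro hforces
    obtain ⟨τ, hlegal, hτ⟩ := exists_breaker_strategy_of_not_makerForces hforces
    exact ⟨τ, fun σ hσ ↦ ⟨fun n ↦ hlegal _, hτ σ hσ⟩⟩

end Strategies

/-! ### Contractions of game-triples -/

/-- The unordered pair of endpoints of the edge `e`. -/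
def Triple.endpoints (t : Triple) (e : ℕ) : Sym2 ℕ := s((t.ends e).1, (t.ends e).2)

/-- `IsContraction t' t c φ D` says that the vertex map `c` and the edge map `φ` exhibit `t` as
containing a contraction of `t'`: the edges in `D` are embedded by `φ` in the edges of `t`
compatibly with `c`, the endpoints of every other edge are merged by `c`, and `c` respects the
distinguished sets. -/
structure IsContraction (t' t : Triple) (c φ : ℕ → ℕ) (D : Finset ℕ) : Prop where
  injOn : Set.InjOn φ D
  mem_edges : ∀ e ∈ D, φ e ∈ t.E
  endpoints_eq : ∀ e ∈ D, t.endpoints (φ e) = (t'.endpoints e).map c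
  isDiag : ∀ e ∈ t'.E, e ∉ D → ((t'.endpoints e).map c).IsDiag
  mapsTo_A : ∀ a ∈ t'.A, c a ∈ t.A
  mapsTo_B : ∀ b ∈ t'.B, c b ∈ t.B

namespace IsContraction

variable {t t' : Triple} {c φ : ℕ → ℕ} {D : Finset ℕ}

theorem of_subset (hE : t'.E ⊆ t.E) (hends : t'.ends = t.ends) (hA : t'.A ⊆ t.A)
    (hB : t'.B ⊆ t.B) : IsContraction t' t id id t'.E where
  injOn := Function.injective_id.injOn
  mem_edges _ he := hE he
  endpoints_eq e _ := by simp [Triple.endpoints, hends]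
  isDiag _ he he' := absurd he he'
  mapsTo_A _ ha := hA ha
  mapsTo_B _ hb := hB hb

theorem reach (hc : IsContraction t' t c φ D) {F' F : Set ℕ}
    (hF : ∀ e ∈ D, e ∈ F' → φ e ∈ F) {u w : ℕ} (h : Reach t' F' u w) :
    Reach t F (c u) (c w) := by
  refine Relation.ReflTransGen.lift' c (fun a b ⟨e, heF, heE, hends⟩ ↦ ?_) u w h
  have hab : t'.endpoints e = s(a, b) := Sym2.eq_iff.2 hends
  by_cases heD : e ∈ D
  · have hcab := hc.endpoints_eq e heD
    rw [hab, Sym2.map_mk] at hcab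
    exact .single ⟨φ e, hF e heD heF, hc.mem_edges e heD, Sym2.eq_iff.1 hcab⟩
  · have hdiag := hc.isDiag e heE heD
    rw [hab, Sym2.map_mk, Sym2.mk_isDiag_iff] at hdiag
    rw [Function.onFun, hdiag]

theorem crossWin (hc : IsContraction t' t c φ D) {F' F : Set ℕ}
    (hF : ∀ e ∈ D, e ∈ F' → φ e ∈ F) : CrossWin t' F' → CrossWin t F :=
  fun ⟨a, ha, b, hb, h⟩ ↦ ⟨c a, hc.mapsTo_A a ha, c b, hc.mapsTo_B b hb, hc.reach hF h⟩

theorem makerForces (hc : IsContraction t' t c φ D) {p q : ℕ}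
    (h : MakerForces p q (fun M ↦ CrossWin t' ↑M) ∅ t'.E) :
    MakerForces p q (fun M ↦ CrossWin t ↑M) ∅ t.E :=
  h.map hc.injOn (fun _ _ hM ↦ hc.crossWin hM) (by simp)
    (fun e he _ ↦ Finset.mem_union_right _ (hc.mem_edges e he))

end IsContraction

/-! ### Separating a vertex -/

section Separation

theorem exists_injOn_of_card_fiber_le {α β κ : Type*} [Nonempty β] [DecidableEq κ]
    {D : Finset α} {E : Finset β} {f : α → κ} {g : β → κ}
    (h : ∀ k, (D.filter (f · = k)).card ≤ (E.filter (g · = k)).card) :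
    ∃ φ : α → β, Set.InjOn φ D ∧ ∀ e ∈ D, φ e ∈ E ∧ g (φ e) = f e := by
  have hfiber (k : κ) : ∃ ψ : α → β, (D.filter (f · = k) : Set α) ⊆ ψ ⁻¹' (E.filter (g · = k)) ∧
      Set.InjOn ψ (D.filter (f · = k)) :=
    (Finset.finite_toSet _).exists_injOn_of_encard_le (by
      simpa only [Set.encard_coe_eq_coe_finsetCard, Nat.cast_le] using h k)
  choose ψ hmaps hinj using hfiber
  have hψ : ∀ e ∈ D, ψ (f e) e ∈ E ∧ g (ψ (f e) e) = f e := fun e he ↦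
    Finset.mem_filter.1 (hmaps (f e) (Finset.mem_filter.2 ⟨he, rfl⟩))
  refine ⟨fun e ↦ ψ (f e) e, fun a ha b hb hab ↦ ?_, hψ⟩
  have hfab : f a = f b := by
    rw [← (hψ a ha).2, ← (hψ b hb).2]
    exact congrArg g hab
  exact hinj (f a) (Finset.mem_filter.2 ⟨ha, rfl⟩) (Finset.mem_filter.2 ⟨hb, hfab.symm⟩)
    (by simpa only [hfab] using hab)

/-- The number of edges of `t` with unordered pair of endpoints `z`; it unifies `multTo` and
`loopsAt`. -/
def Triple.mult (t : Triple) (z : Sym2 ℕ) : ℕ := (t.E.filter (t.endpoints · = z)).card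

theorem multTo_eq_mult (t : Triple) (u w : ℕ) : multTo t u w = t.mult s(u, w) := by
  simp only [multTo, Triple.mult, Triple.endpoints, Sym2.eq_iff, Prod.ext_iff]

theorem loopsAt_eq_mult (t : Triple) (v : ℕ) : loopsAt t v = t.mult s(v, v) := by
  simp only [loopsAt, Triple.mult, Triple.endpoints, Sym2.eq_iff, Prod.ext_iff, or_self]

theorem incid_iff_mem_endpoints {t : Triple} {v e : ℕ} : incid t v e ↔ v ∈ t.endpoints e := by
  simp only [incid, Triple.endpoints, Sym2.mem_iff, eq_comm]

variable {v v₁ v₂ : ℕ}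

/-- The effect on a set of vertices of replacing `v` by `v₁` and `v₂`. -/
def splitSet (v v₁ v₂ : ℕ) (S : Finset ℕ) : Finset ℕ :=
  if v ∈ S then insert v₁ (insert v₂ (S.erase v)) else S

/-- The vertex map merging `v₁` and `v₂` back into `v`. -/
def merge (v v₁ v₂ x : ℕ) : ℕ := if x = v₁ ∨ x = v₂ then v else x

theorem splitSet_subset_insert {S T : Finset ℕ} (h : S ⊆ T) :
    splitSet v v₁ v₂ S ⊆ insert v₁ (insert v₂ (T.erase v)) := by
  unfold splitSet
  split_ifs with hv
  · gcongr
  · intro x hx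
    have hxv : x ≠ v := by
      rintro rfl
      exact hv hx
    simp [hxv, h hx]

theorem merge_left : merge v v₁ v₂ v₁ = v := by simp [merge]

theorem merge_right : merge v v₁ v₂ v₂ = v := by simp [merge]

theorem merge_of_ne {x : ℕ} (h₁ : x ≠ v₁) (h₂ : x ≠ v₂) : merge v v₁ v₂ x = x := by
  simp [merge, h₁, h₂]

theorem merge_mem_of_mem_splitSet {S T : Finset ℕ} (hST : S ⊆ T) (h₁ : v₁ ∉ T.erase v)
    (h₂ : v₂ ∉ T.erase v) {x : ℕ} (hx : x ∈ splitSet v v₁ v₂ S) : merge v v₁ v₂ x ∈ S := by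
  have hfix {y : ℕ} (hy : y ∈ S.erase v) : merge v v₁ v₂ y = y := by
    have hyT := Finset.erase_subset_erase v hST hy
    exact merge_of_ne (ne_of_mem_of_not_mem hyT h₁) (ne_of_mem_of_not_mem hyT h₂)
  unfold splitSet at hx
  split_ifs at hx with hv
  · simp only [Finset.mem_insert] at hx
    rcases hx with rfl | rfl | hx
    · rwa [merge_left]
    · rwa [merge_right]
    · rw [hfix hx]
      exact Finset.mem_of_mem_erase hx
  · rwa [hfix (Finset.mem_erase.2 ⟨ne_of_mem_of_not_mem hx hv, hx⟩)]

theorem eq_or_eq_of_merge_eq {T : Finset ℕ} {x : ℕ}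
    (hx : x ∈ insert v₁ (insert v₂ (T.erase v))) (h : merge v v₁ v₂ x = v) :
    x = v₁ ∨ x = v₂ := by
  grind [merge]

theorem eq_of_merge_eq_of_ne {u x : ℕ} (hu : u ≠ v) (h : merge v v₁ v₂ x = u) :
    x = u ∧ u ≠ v₁ ∧ u ≠ v₂ := by
  grind [merge]

theorem map_merge_of_notMem {z : Sym2 ℕ} (hv : v ∉ z.map (merge v v₁ v₂)) :
    v₁ ∉ z ∧ v₂ ∉ z ∧ z.map (merge v v₁ v₂) = z := by
  have h₁ : v₁ ∉ z := fun h ↦ hv (Sym2.mem_map.2 ⟨v₁, h, merge_left⟩)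
  have h₂ : v₂ ∉ z := fun h ↦ hv (Sym2.mem_map.2 ⟨v₂, h, merge_right⟩)
  refine ⟨h₁, h₂, ?_⟩
  calc z.map (merge v v₁ v₂) = z.map id := Sym2.map_congr fun x hx ↦
        merge_of_ne (ne_of_mem_of_not_mem hx h₁) (ne_of_mem_of_not_mem hx h₂)
    _ = z := by rw [Sym2.map_id, id]

/-- The part of `SepVtx` saying that merging `v₁` and `v₂` in `t'` recovers `t` up to one extra
loop at `v`, in terms of unordered pairs of endpoints. -/
structure IsSeparation (t t' : Triple) (v v₁ v₂ : ℕ) : Prop where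
  notMem_left : v₁ ∉ t.V.erase v
  notMem_right : v₂ ∉ t.V.erase v
  mem_vertices : ∀ e ∈ t'.E, ∀ x ∈ t'.endpoints e, x ∈ insert v₁ (insert v₂ (t.V.erase v))
  old_edge : ∀ e ∈ t'.E, v₁ ∉ t'.endpoints e → v₂ ∉ t'.endpoints e →
    e ∈ t.E ∧ t.endpoints e = t'.endpoints e
  adj : 0 < t'.mult s(v₁, v₂)
  mult_loop :
    t'.mult s(v₁, v₂) + t'.mult s(v₁, v₁) + t'.mult s(v₂, v₂) = t.mult s(v, v) + 1
  mult_edge : ∀ u ∈ t.V.erase v, t'.mult s(u, v₁) + t'.mult s(u, v₂) = t.mult s(u, v)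
  A_eq : t'.A = splitSet v v₁ v₂ t.A
  B_eq : t'.B = splitSet v v₁ v₂ t.B

theorem SepVtx.exists_isSeparation {t t' : Triple} (h : SepVtx t t') :
    ∃ v v₁ v₂, IsSeparation t t' v v₁ v₂ := by
  obtain ⟨v, v₁, v₂, -, -, h₁, h₂, hV, -, hold, hends, hadj, hloop, hmult, hA, hB⟩ := h
  simp only [multTo_eq_mult, loopsAt_eq_mult, incid_iff_mem_endpoints] at *
  refine ⟨v, v₁, v₂, h₁, h₂, fun e he x hx ↦ ?_, fun e he he₁ he₂ ↦ ?_, hadj, hloop, hmult, hA, hB⟩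
  · rw [← hV]
    rcases Sym2.mem_iff.1 hx with rfl | rfl
    exacts [(hends e he).1, (hends e he).2]
  · obtain ⟨heE, heq, -⟩ := hold e he ⟨he₁, he₂⟩
    exact ⟨heE, by rw [Triple.endpoints, Triple.endpoints, heq]⟩

namespace IsSeparation

variable {t t' : Triple}

theorem card_filter_merge_of_notMem (h : IsSeparation t t' v v₁ v₂) {z : Sym2 ℕ} (hz : v ∉ z) :
    (t'.E.filter fun e ↦ (t'.endpoints e).map (merge v v₁ v₂) = z).card ≤ t.mult z := by
  refine Finset.card_le_card fun e he ↦ ?_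
  obtain ⟨he', rfl⟩ := Finset.mem_filter.1 he
  obtain ⟨h₁, h₂, hmap⟩ := map_merge_of_notMem hz
  obtain ⟨heE, hends⟩ := h.old_edge e he' h₁ h₂
  exact Finset.mem_filter.2 ⟨heE, hends.trans hmap.symm⟩

theorem card_filter_merge_of_ne (h : IsSeparation t t' v v₁ v₂) {u : ℕ} (hu : u ≠ v) :
    (t'.E.filter fun e ↦ (t'.endpoints e).map (merge v v₁ v₂) = s(u, v)).card ≤
      t.mult s(u, v) := by
  have hpre (e : ℕ) (he : e ∈ t'.E) (hmap : (t'.endpoints e).map (merge v v₁ v₂) = s(u, v)) :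
      u ∈ t.V.erase v ∧ (t'.endpoints e = s(u, v₁) ∨ t'.endpoints e = s(u, v₂)) := by
    have hV := h.mem_vertices e he
    obtain ⟨x, hx, hxu⟩ := Sym2.mem_map.1 (hmap ▸ Sym2.mem_mk_left u v)
    obtain ⟨rfl, hx₁, hx₂⟩ := eq_of_merge_eq_of_ne hu hxu
    obtain ⟨y, hxy⟩ := Sym2.mem_iff_exists.1 hx
    rw [hxy, Sym2.map_mk, hxu, Sym2.congr_right] at hmap
    have hy := eq_or_eq_of_merge_eq (hV y (hxy ▸ Sym2.mem_mk_right x y)) hmap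
    rw [hxy, Sym2.congr_right, Sym2.congr_right]
    exact ⟨by simpa [hx₁, hx₂] using hV x hx, hy⟩
  rcases Finset.eq_empty_or_nonempty
    (t'.E.filter fun e ↦ (t'.endpoints e).map (merge v v₁ v₂) = s(u, v)) with hempty | ⟨e, he⟩
  · simp [hempty]
  · obtain ⟨he, hmap⟩ := Finset.mem_filter.1 he
    rw [← h.mult_edge u (hpre e he hmap).1]
    refine le_trans (Finset.card_le_card fun e he ↦ ?_) (Finset.card_union_le _ _)
    obtain ⟨he, hmap⟩ := Finset.mem_filter.1 he
    simpa [he] using (hpre e he hmap).2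

theorem card_filter_merge_loop (h : IsSeparation t t' v v₁ v₂) :
    (t'.E.filter fun e ↦ (t'.endpoints e).map (merge v v₁ v₂) = s(v, v)).card ≤
      t.mult s(v, v) + 1 := by
  rw [← h.mult_loop]
  refine le_trans (Finset.card_le_card fun e he ↦ ?_) <| (Finset.card_union_le _ _).trans <|
    Nat.add_le_add_right (Finset.card_union_le _ _) _
  obtain ⟨he, hmap⟩ := Finset.mem_filter.1 he
  have hnew : ∀ x ∈ t'.endpoints e, x = v₁ ∨ x = v₂ := fun x hx ↦ by
    have hxv : merge v v₁ v₂ x ∈ (t'.endpoints e).map (merge v v₁ v₂) :=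
      Sym2.mem_map.2 ⟨x, hx, rfl⟩
    rw [hmap, Sym2.mem_iff, or_self] at hxv
    exact eq_or_eq_of_merge_eq (h.mem_vertices e he x hx) hxv
  simp only [Finset.mem_union, Finset.mem_filter, he, true_and]
  generalize t'.endpoints e = w at hnew
  induction w using Sym2.ind with
  | _ a b =>
    rcases hnew a (Sym2.mem_mk_left a b) with rfl | rfl <;>
      rcases hnew b (Sym2.mem_mk_right _ b) with rfl | rfl <;>
      simp [Sym2.eq_swap]

theorem card_filter_merge_erase_le (h : IsSeparation t t' v v₁ v₂) {e₀ : ℕ} (he₀ : e₀ ∈ t'.E)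
    (hends₀ : t'.endpoints e₀ = s(v₁, v₂)) (z : Sym2 ℕ) :
    ((t'.E.erase e₀).filter fun e ↦ (t'.endpoints e).map (merge v v₁ v₂) = z).card ≤
      t.mult z := by
  have herase : ((t'.E.erase e₀).filter fun e ↦ (t'.endpoints e).map (merge v v₁ v₂) = z).card ≤
      (t'.E.filter fun e ↦ (t'.endpoints e).map (merge v v₁ v₂) = z).card :=
    Finset.card_le_card (Finset.filter_subset_filter _ (Finset.erase_subset _ _))
  by_cases hv : v ∈ z
  · obtain ⟨u, rfl⟩ := Sym2.mem_iff_exists.1 hv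
    rcases eq_or_ne u v with rfl | hu
    · rw [Finset.filter_erase, Finset.card_erase_of_mem]
      · exact Nat.sub_le_of_le_add h.card_filter_merge_loop
      · simp [he₀, hends₀, merge_left, merge_right]
    · rw [Sym2.eq_swap] at herase ⊢
      exact herase.trans (h.card_filter_merge_of_ne hu)
  · exact herase.trans (h.card_filter_merge_of_notMem hv)

theorem exists_isContraction (h : IsSeparation t t' v v₁ v₂) (hwf : WF t) :
    ∃ φ D, IsContraction t' t (merge v v₁ v₂) φ D := by
  obtain ⟨e₀, he₀⟩ := Finset.card_pos.1 h.adj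
  obtain ⟨he₀, hends₀⟩ := Finset.mem_filter.1 he₀
  obtain ⟨φ, hinj, hφ⟩ :=
    exists_injOn_of_card_fiber_le (h.card_filter_merge_erase_le he₀ hends₀)
  refine ⟨φ, t'.E.erase e₀, hinj, fun e he ↦ (hφ e he).1, fun e he ↦ (hφ e he).2,
    fun e he heD ↦ ?_, fun a ha ↦ ?_, fun b hb ↦ ?_⟩
  · obtain rfl : e = e₀ := by
      by_contra hne
      exact heD (Finset.mem_erase.2 ⟨hne, he⟩)
    simp [hends₀, merge_left, merge_right]
  · exact merge_mem_of_mem_splitSet hwf.2.1 h.notMem_left h.notMem_right (h.A_eq ▸ ha)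
  · exact merge_mem_of_mem_splitSet hwf.2.2 h.notMem_left h.notMem_right (h.B_eq ▸ hb)

end IsSeparation

end Separation

theorem Step.exists_isContraction {t t' : Triple} (hs : Step t t') (hwf : WF t) :
    ∃ c φ D, IsContraction t' t c φ D := by
  rcases hs with ⟨v, -, -, hends, hE, hA, hB⟩ | ⟨e, -, -, hends, hE, hA, hB⟩ | hsep
  · exact ⟨id, id, t'.E, .of_subset (fun e he ↦ ((hE e).1 he).1) hends
      (hA ▸ Finset.erase_subset _ _) (hB ▸ Finset.erase_subset _ _)⟩
  · exact ⟨id, id, t'.E, .of_subset (hE ▸ Finset.erase_subset _ _) hends hA.subset hB.subset⟩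
  · obtain ⟨v, v₁, v₂, h⟩ := hsep.exists_isSeparation
    exact ⟨_, h.exists_isContraction hwf⟩

theorem WF.step {t t' : Triple} (hwf : WF t) (hs : Step t t') : WF t' := by
  obtain ⟨hV, hA, hB⟩ := hwf
  rcases hs with ⟨v, -, hV', hends', hE', hA', hB'⟩ | ⟨e, -, hV', hends', hE', hA', hB'⟩ |
    ⟨v, v₁, v₂, -, -, -, -, hV', -, -, hends', -, -, -, hA', hB'⟩
  · refine ⟨fun e he ↦ ?_, ?_, ?_⟩
    · obtain ⟨heE, hev⟩ := (hE' e).1 he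
      rw [incid, not_or] at hev
      rw [hV', hends']
      exact ⟨Finset.mem_erase.2 ⟨hev.1, (hV e heE).1⟩, Finset.mem_erase.2 ⟨hev.2, (hV e heE).2⟩⟩
    · exact hA' ▸ hV' ▸ Finset.erase_subset_erase v hA
    · exact hB' ▸ hV' ▸ Finset.erase_subset_erase v hB
  · rw [WF, hV', hends', hE', hA', hB']
    exact ⟨fun f hf ↦ hV f (Finset.mem_of_mem_erase hf), hA, hB⟩
  · exact ⟨hends', hA' ▸ hV' ▸ splitSet_subset_insert hA, hB' ▸ hV' ▸ splitSet_subset_insert hB⟩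

theorem WF.of_reflTransGen {t t' : Triple} (hwf : WF t) (hs : Relation.ReflTransGen Step t t') :
    WF t' := by
  induction hs with
  | refl => exact hwf
  | tail _ hs ih => exact ih.step hs

/-- **Monotonicity of the Shannon switching game.** Suppose the game-triple `t'` is
obtained from the (well-formed) game-triple `t` by a finite sequence of
vertex-deletions, edge-deletions and vertex-separations. Then, for all (positive)
`p, q`: (i) if Maker has a winning strategy for the `(p,q)`-Shannon switching game on
`t'`, then she also has one on `t`; and (ii) if Breaker has a winning strategy for the
`(p,q)`-Shannon switching game on `t`, then he also has one on `t'`. -/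
theorem shannon_monotonicity (t t' : Triple) (hwf : WF t)
    (hsteps : Relation.ReflTransGen Step t t') (p q : ℕ) (hp : 1 ≤ p) (hq : 1 ≤ q) :
    (MakerWins t' p q → MakerWins t p q) ∧
    (BreakerWins t p q → BreakerWins t' p q) := by
  have forces : MakerForces p q (fun M ↦ CrossWin t' ↑M) ∅ t'.E →
      MakerForces p q (fun M ↦ CrossWin t ↑M) ∅ t.E := by
    induction hsteps with
    | refl => exact id
    | tail hpre hs ih =>
      obtain ⟨c, φ, D, hc⟩ := hs.exists_isContraction (hwf.of_reflTransGen hpre)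
      exact ih ∘ hc.makerForces
  rw [makerWins_iff_makerForces hp, makerWins_iff_makerForces hp,
    breakerWins_iff_not_makerForces hp, breakerWins_iff_not_makerForces hp]
  exact ⟨forces, mt forces⟩

end ShannonMonotone
end
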